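/- Let S be a semioval of size q − 1 + a in PG(2,q) with a > 2. Suppose that S has two a-secants ℓ₁ and ℓ₂, with nuclei N₁ and N₂ respectively, and let S' = S∖(ℓ₁ ∪ ℓ₂). Then N₁ ∈ ℓ₂, N₂ ∈ ℓ₁, the tangents to S through the points of S' all pass through the point ℓ₁ ∩ ℓ₂, and one of the following holds: (1) S is the symmetric difference of ℓ₁ and ℓ₂ with one further point removed from both lines; (2) S is projectively equivalent to the Blokhuis semioval; (3) for each R ∈ S' there are at least three lines through R meeting S in at least three points, and q ≤ a + 1 + (a − 2)²(a − 3)²/6. -/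

import Mathlib

/-! Common setup: the Desarguesian projective plane `PG(2,q)` over a finite field `F = GF(q)`.
Points are the projective points of `F³`; lines are the 2-dimensional linear subspaces of `F³`,
with incidence given by containment. -/

/-- Points of `PG(2,F)`. -/
abbrev PGPoint (F : Type*) [Field F] := Projectivization F (Fin 3 → F)

/-- Lines of `PG(2,F)`: the 2-dimensional linear subspaces of `F³`. -/
abbrev PGLine (F : Type*) [Field F] := {W : Submodule F (Fin 3 → F) // Module.finrank F W = 2}

/-- Incidence between a point and a line of `PG(2,F)`. -/
def pgMem {F : Type*} [Field F] (P : PGPoint F) (L : PGLine F) : Prop :=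
  P.submodule ≤ L.val

/-- The number of points of the point set `B` lying on the line `L`;
`L` is a *`k`-secant* of `B` if `nsec B L = k`, a *tangent* if `k = 1`,
a *bisecant* if `k = 2` and a *trisecant* if `k = 3`. -/
noncomputable def nsec {F : Type*} [Field F] (B : Set (PGPoint F)) (L : PGLine F) : ℕ :=
  {P ∈ B | pgMem P L}.ncard

/-- A blocking set: a point set meeting every line. -/
def isBlocking {F : Type*} [Field F] (B : Set (PGPoint F)) : Prop :=
  ∀ L : PGLine F, ∃ P ∈ B, pgMem P L

/-- A minimal blocking set: every point is essential. -/
def isMinimalBlocking {F : Type*} [Field F] (B : Set (PGPoint F)) : Prop :=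
  isBlocking B ∧ ∀ P ∈ B, ¬ isBlocking (B \ {P})

/-- `B` is a blocking set of Rédei type with Rédei line `ℓ`: a blocking set of size
`q + N ≤ 2q` such that `ℓ` meets `B` in exactly `N = |B| − q` points. -/
def isRedeiWithLine {F : Type*} [Field F] (q : ℕ) (B : Set (PGPoint F)) (ℓ : PGLine F) : Prop :=
  isBlocking B ∧ B.ncard ≤ 2 * q ∧ nsec B ℓ + q = B.ncard

/-- A semioval: through each of its points there passes exactly one tangent. -/
def isSemioval {F : Type*} [Field F] (S : Set (PGPoint F)) : Prop :=
  ∀ P ∈ S, ∃! t : PGLine F, pgMem P t ∧ nsec S t = 1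

/-- A vector of `F³` with some coordinate equal to `1` is nonzero. -/
lemma vec_ne_zero_of_coord_one {F : Type*} [Field F] (v : Fin 3 → F) (i : Fin 3)
    (hvi : v i = 1) : v ≠ 0 := by
  intro h0; rw [h0] at hvi; simp at hvi

/-- The Blokhuis semioval in `PG(2,q)`, `q` odd: the point set
`{(0,1,s), (s,0,1), (1,s,0) : −s is not a square in GF(q)}` (homogeneous coordinates). -/
def blokhuisSemioval (F : Type*) [Field F] : Set (PGPoint F) :=
  {P : PGPoint F | ∃ s : F, ¬ IsSquare (-s) ∧
    (P = Projectivization.mk F ![0, 1, s] (vec_ne_zero_of_coord_one _ 1 rfl) ∨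
     P = Projectivization.mk F ![s, 0, 1] (vec_ne_zero_of_coord_one _ 2 rfl) ∨
     P = Projectivization.mk F ![1, s, 0] (vec_ne_zero_of_coord_one _ 0 rfl))}

/-- Two point sets of `PG(2,q)` are projectively equivalent if one is the image of the other
under an element of `PGL(3,q)`, i.e. under the map induced by an invertible linear map of `F³`. -/
def projEquivalent {F : Type*} [Field F] (A B : Set (PGPoint F)) : Prop :=
  ∃ g : (Fin 3 → F) ≃ₗ[F] (Fin 3 → F),
    Projectivization.map (σ := RingHom.id F) g.toLinearMap g.injective '' A = B

/-- `S` is the symmetric difference of two lines with one further point removed from both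
lines. -/
def isSymmDiffOfTwoLinesMinusTwoPoints {F : Type*} [Field F] (S : Set (PGPoint F))
    (ℓ₁ ℓ₂ : PGLine F) : Prop :=
  ℓ₁ ≠ ℓ₂ ∧ ∃ P₁ P₂ : PGPoint F,
    pgMem P₁ ℓ₁ ∧ ¬ pgMem P₁ ℓ₂ ∧ pgMem P₂ ℓ₂ ∧ ¬ pgMem P₂ ℓ₁ ∧
    S = (({P | pgMem P ℓ₁} \ {P | pgMem P ℓ₂}) ∪ ({P | pgMem P ℓ₂} \ {P | pgMem P ℓ₁}))
        \ {P₁, P₂}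

/-!
Take `ℓ₁` as the line at infinity and `ℓ₂` as the axis `x = 0`, so that `S` is given by a set `D` of
slopes, a set `B` of ordinates and a set `T` of affine points off the axis. Seen from a point of `D`
or of `B`, the remaining points off its line and the tangent cover `F` exactly once, and the
corresponding linear factors multiply to `X ^ q - X`. Differentiating these identities at a root and
comparing a point of `D` with a point of `B`, as in Segre's lemma of tangents, forces `N₁ ∈ ℓ₂` and
`N₂ ∈ ℓ₁`. Seen from a point `R` of `T`, the product is `X ^ q - X` times an excess polynomial of
degree at most `a - 2`. Its values on `D` and on the slopes of the joins of `R` with the axis are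
known, and Vieta's formula for the sum of the roots then puts `R` on the line `N₁N₂`. Hence `D` is
invariant under multiplication by the quotients of two abscissas of points of `T`; if `T` is
nonempty then `2 a + 1 = q`, these quotients are squares, and `D`, `B` and the set of abscissas are
cosets of the group of nonzero squares, which is the Blokhuis semioval.
-/

section Polynomials

open Polynomial Lagrange

variable {F ι : Type*} [Field F]

lemma eval_nodal_eq_zero_iff {s : Finset ι} {v : ι → F} {x : F} :
    (nodal s v).eval x = 0 ↔ ∃ i ∈ s, v i = x := by
  rw [eval_nodal, Finset.prod_eq_zero_iff]
  simp only [sub_eq_zero, eq_comm]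

lemma coeff_card_nodal (s : Finset ι) (v : ι → F) : (nodal s v).coeff s.card = 1 := by
  simpa only [natDegree_nodal] using (nodal_monic (s := s) (v := v)).coeff_natDegree

lemma eq_C_mul_nodal {s : Finset ι} {v : ι → F} (hv : Set.InjOn v s) {Q : F[X]}
    (hdeg : Q.natDegree ≤ s.card) (h0 : ∀ i ∈ s, Q.eval (v i) = 0) :
    Q = C (Q.coeff s.card) * nodal s v := by
  refine eq_of_degree_sub_lt_of_eval_index_eq s hv ?_ fun i hi => ?_
  · rw [degree_lt_iff_coeff_zero]
    intro k hk
    rcases hk.eq_or_lt with rfl | hk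
    · simp [coeff_card_nodal]
    · have hnodal : (nodal s v).coeff k = 0 :=
        coeff_eq_zero_of_natDegree_lt (by rwa [natDegree_nodal])
      simp [coeff_eq_zero_of_natDegree_lt (hdeg.trans_lt hk), hnodal]
  · simp [h0 i hi, eval_nodal_at_node hi]

lemma coeff_card_sub_one_eq_neg_coeff_card_mul_sum {s : Finset ι} {v : ι → F}
    (hv : Set.InjOn v s) (hs : 0 < s.card) {Q : F[X]} (hdeg : Q.natDegree ≤ s.card)
    (h0 : ∀ i ∈ s, Q.eval (v i) = 0) :
    Q.coeff (s.card - 1) = -(Q.coeff s.card * ∑ i ∈ s, v i) := by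
  have h := congrArg (fun P => coeff P (s.card - 1)) (eq_C_mul_nodal hv hdeg h0)
  simpa only [coeff_C_mul, nodal_eq, prod_X_sub_C_coeff_card_pred s v hs, mul_neg] using h

lemma derivative_nodal_eval_ne_zero {D : Finset F} {d : F} (hd : d ∈ D) :
    (derivative (nodal D id)).eval d ≠ 0 := by
  classical
  have h := nodalWeight_ne_zero (v := (id : F → F)) Function.injective_id.injOn hd
  rwa [nodalWeight_eq_eval_derivative_nodal hd, ne_eq, inv_eq_zero] at h

lemma coeff_card_X_mul_derivative_nodal (D : Finset F) :
    (X * derivative (nodal D id)).coeff D.card = (D.card : F) := by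
  rcases hn : D.card with _ | n
  · simp
  · rw [coeff_X_mul, coeff_derivative, ← hn, coeff_card_nodal, hn, one_mul, Nat.cast_succ]

lemma natDegree_X_mul_derivative_nodal_le (D : Finset F) :
    (X * derivative (nodal D id)).natDegree ≤ D.card := by
  rcases D.eq_empty_or_nonempty with rfl | hD
  · simp
  · have h : (derivative (nodal D (id : F → F))).natDegree ≤ D.card - 1 := by
      simpa only [natDegree_nodal] using natDegree_derivative_le (nodal D (id : F → F))
    have := natDegree_mul_le (p := (X : F[X])) (q := derivative (nodal D id))
    rw [natDegree_X] at this
    have := hD.card_pos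
    omega

/-- Here `X * E' - c` is the multiple `#D * E` of `E = nodal D id`. -/
lemma sum_eq_zero_of_mul_derivative_const {D : Finset F} (hD : 1 < D.card) {c : F} (hc : c ≠ 0)
    (h : ∀ d ∈ D, d * (derivative (nodal D id)).eval d = c) :
    (D.card : F) ≠ 0 ∧ ∑ d ∈ D, d = 0 := by
  set E := nodal D (id : F → F) with hE
  have hdeg : (X * derivative E - C c).natDegree ≤ D.card := by
    simpa only [natDegree_sub_C] using natDegree_X_mul_derivative_nodal_le D
  have h0 : ∀ d ∈ D, (X * derivative E - C c).eval (id d) = 0 := fun d hd => by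
    simpa [sub_eq_zero] using h d hd
  have hlead : (X * derivative E - C c).coeff D.card = (D.card : F) := by
    rw [coeff_sub, coeff_card_X_mul_derivative_nodal, coeff_C_of_ne_zero (by omega), sub_zero]
  constructor
  · intro hcard
    have hzero := eq_C_mul_nodal Function.injective_id.injOn hdeg h0
    rw [hlead, hcard, C_0, zero_mul] at hzero
    exact hc (by simpa using congrArg (eval 0) hzero)
  · have hsum := coeff_card_sub_one_eq_neg_coeff_card_mul_sum Function.injective_id.injOn
      (by omega) hdeg h0
    obtain ⟨n, hn⟩ : ∃ n, D.card = n + 2 := ⟨D.card - 2, by omega⟩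
    have hcoeff : E.coeff (n + 1) = -∑ d ∈ D, d := by
      rw [hE, nodal_eq, show n + 1 = D.card - 1 by omega]
      exact prod_X_sub_C_coeff_card_pred D id (by omega)
    rw [hlead, show D.card - 1 = n + 1 by omega, coeff_sub, coeff_X_mul, coeff_derivative, hcoeff,
      coeff_C_succ, hn] at hsum
    push_cast [id] at hsum
    linear_combination hsum

lemma card_eq_zero_of_derivative_const {D : Finset F} (hD : 1 < D.card) {c : F}
    (h : ∀ d ∈ D, (derivative (nodal D id)).eval d = c) : (D.card : F) = 0 := by
  have hderiv : derivative (nodal D (id : F → F)) = C c := by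
    refine eq_of_degree_sub_lt_of_eval_index_eq D Function.injective_id.injOn ?_ fun d hd => by
      simpa using h d hd
    rw [degree_lt_iff_coeff_zero]
    intro k hk
    rw [coeff_sub, coeff_derivative, coeff_eq_zero_of_natDegree_lt
      (by rw [natDegree_nodal]; omega), coeff_C_of_ne_zero (by omega), zero_mul, sub_zero]
  obtain ⟨n, hn⟩ : ∃ n, D.card = n + 2 := ⟨D.card - 2, by omega⟩
  rw [← coeff_card_X_mul_derivative_nodal, hderiv, hn, coeff_X_mul, coeff_C_succ]

lemma quadratic_eq_zero {s : Finset F} (hs : 2 < s.card) {α β γ : F}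
    (h : ∀ x ∈ s, α * x ^ 2 + β * x + γ = 0) : α = 0 ∧ β = 0 ∧ γ = 0 := by
  have hQ : C α * X ^ 2 + C β * X + C γ = 0 :=
    eq_zero_of_natDegree_lt_card_of_eval_eq_zero' _ s (fun x hx => by simpa using h x hx)
      (natDegree_quadratic_le.trans_lt hs)
  refine ⟨?_, ?_, ?_⟩
  · simpa using congrArg (coeff · 2) hQ
  · simpa using congrArg (coeff · 1) hQ
  · simpa using congrArg (coeff · 0) hQ

/-- Eliminating `δ d` leaves a polynomial identity of degree two in `d`. -/
lemma coeff_eq_zero_of_mul_sub_eq {D : Finset F} {δ : F → F} (hD : 2 < D.card)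
    (hδ : ∀ d ∈ D, δ d ≠ 0) {n β β' w w' μ μ' : F} (h : ∀ d ∈ D, δ d * (d - μ) = β * (d * n + w))
    (h' : ∀ d ∈ D, δ d * (d - μ') = β' * (d * n + w')) :
    n * (β' - β) = 0 ∧ β' * w' - β' * n * μ - (β * w - β * n * μ') = 0 ∧
      μ' * β * w - μ * β' * w' = 0 := by
  refine quadratic_eq_zero hD fun d hd => mul_left_cancel₀ (hδ d hd) ?_
  linear_combination (β' * (d * n + w')) * h d hd - (β * (d * n + w)) * h' d hd

variable [Fintype F]

lemma monic_X_pow_card_sub_X : (X ^ Fintype.card F - X : F[X]).Monic :=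
  monic_X_pow_sub (by rw [degree_X]; exact_mod_cast Fintype.one_lt_card)

lemma X_pow_card_sub_X_dvd {Q : F[X]} (h : ∀ s, Q.eval s = 0) :
    (X ^ Fintype.card F - X) ∣ Q := by
  rcases eq_or_ne Q 0 with rfl | hQ
  · exact dvd_zero _
  have hcard : 1 < Fintype.card F := Fintype.one_lt_card
  have hsplits : (X ^ Fintype.card F - X : F[X]).Splits := by
    rw [splits_iff_card_roots, FiniteField.roots_X_pow_card_sub_X,
      FiniteField.X_pow_card_sub_X_natDegree_eq F hcard, ← Finset.card_def, Finset.card_univ]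
  rw [hsplits.dvd_iff_roots_le_roots (FiniteField.X_pow_card_sub_X_ne_zero F hcard) hQ,
    FiniteField.roots_X_pow_card_sub_X]
  exact (Multiset.le_iff_subset Finset.univ.nodup).2 fun s _ => (mem_roots hQ).2 (h s)

/-- The factors cover `F` and have total degree `q`, so each element of `F` is covered once. -/
lemma nodal_mul_nodal_mul_X_sub_C_eq {A : Finset F} {T : Finset ι} {φ : ι → F} {t : F}
    (hcard : A.card + T.card + 1 = Fintype.card F)
    (h : ∀ s, s ≠ t → s ∈ A ∨ ∃ u ∈ T, φ u = s) :
    nodal A id * nodal T φ * (X - C t) = X ^ Fintype.card F - X := by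
  have hmonic : (nodal A id * nodal T φ * (X - C t)).Monic :=
    (nodal_monic.mul nodal_monic).mul (monic_X_sub_C t)
  refine eq_of_monic_of_dvd_of_natDegree_le monic_X_pow_card_sub_X hmonic
    (X_pow_card_sub_X_dvd fun s => ?_) ?_
  · rcases eq_or_ne s t with rfl | hst
    · simp
    · rcases h s hst with hs | ⟨u, hu, rfl⟩
      · simp [eval_nodal, Finset.prod_eq_zero hs]
      · simp [eval_nodal_at_node hu]
  · rw [(nodal_monic.mul nodal_monic).natDegree_mul (monic_X_sub_C t),
      nodal_monic.natDegree_mul nodal_monic, natDegree_nodal, natDegree_nodal, natDegree_X_sub_C,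
      FiniteField.X_pow_card_sub_X_natDegree_eq F Fintype.one_lt_card, hcard]

lemma derivative_eval_mul_eval_eq_neg {E G ex : F[X]}
    (h : E * G = (X ^ Fintype.card F - X) * ex) {d : F} (hd : E.eval d = 0) :
    (derivative E).eval d * G.eval d = -ex.eval d := by
  simpa [derivative_mul, hd, FiniteField.pow_card, derivative_X_pow] using
    congrArg (fun Q => (derivative Q).eval d) h

lemma derivative_eval_mul_eval_eq_neg_one {E G : F[X]} (h : E * G = X ^ Fintype.card F - X) {d : F}
    (hd : E.eval d = 0) : (derivative E).eval d * G.eval d = -1 := by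
  simpa only [eval_one] using derivative_eval_mul_eval_eq_neg (ex := 1) (by rw [h, mul_one]) hd

end Polynomials

section Squares

variable {F : Type*} [Field F]

lemma not_isSquare_mul_iff [Finite F] {ν : F} (hν : ¬IsSquare ν) (z : F) :
    ¬IsSquare (ν * z) ↔ z ≠ 0 ∧ IsSquare z := by
  classical
  have := Fintype.ofFinite F
  rcases eq_or_ne z 0 with rfl | hz
  · simp
  rw [← quadraticChar_neg_one_iff_not_isSquare, map_mul,
    quadraticChar_neg_one_iff_not_isSquare.2 hν, neg_one_mul, neg_inj,
    quadraticChar_one_iff_isSquare hz, and_iff_right hz]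

variable [Fintype F]

lemma isSquare_iff_pow_eq_one {k : ℕ} (hk : 2 * k + 1 = Fintype.card F) {z : F} (hz : z ≠ 0) :
    IsSquare z ↔ z ^ k = 1 := by
  have hchar : ringChar F ≠ 2 := fun h2 => by
    have := FiniteField.even_card_of_char_two h2
    omega
  rw [FiniteField.isSquare_iff hchar hz, show Fintype.card F / 2 = k by omega]

lemma isSquare_of_forall_mul_mem {D : Finset F} (hD : 2 * D.card + 1 = Fintype.card F)
    (h0 : 0 ∉ D) {x : F} (hx : x ≠ 0) (h : ∀ d ∈ D, d * x ∈ D) : IsSquare x := by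
  classical
  have hinj : Function.Injective (· * x) := mul_left_injective₀ hx
  have himage : D.image (· * x) = D :=
    Finset.eq_of_subset_of_card_le (Finset.image_subset_iff.2 h)
      (Finset.card_image_of_injective _ hinj).ge
  have hprod : (∏ d ∈ D, d) * x ^ D.card = ∏ d ∈ D, d := by
    rw [← Finset.prod_const, ← Finset.prod_mul_distrib]
    conv_rhs => rw [← himage, Finset.prod_image hinj.injOn]
  rw [isSquare_iff_pow_eq_one hD hx]
  exact mul_left_cancel₀ (Finset.prod_ne_zero_iff.2 fun d hd => ne_of_mem_of_not_mem hd h0)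
    (hprod.trans (mul_one _).symm)

lemma mem_iff_isSquare_div {D : Finset F} (hD : 2 * D.card + 1 = Fintype.card F) {x₀ : F}
    (hx₀ : x₀ ≠ 0) (h : ∀ x ∈ D, x ≠ 0 ∧ IsSquare (x / x₀)) (x : F) :
    x ∈ D ↔ x ≠ 0 ∧ IsSquare (x / x₀) := by
  classical
  have hcard : 0 < D.card := by
    have := Fintype.one_lt_card (α := F)
    omega
  have hroot : ∀ x, x ≠ 0 ∧ IsSquare (x / x₀) ↔
      x ∈ Polynomial.nthRootsFinset D.card (x₀ ^ D.card) := fun x => by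
    rw [Polynomial.mem_nthRootsFinset hcard]
    rcases eq_or_ne x 0 with rfl | hx
    · simpa [hcard.ne'] using (pow_ne_zero D.card hx₀).symm
    · rw [isSquare_iff_pow_eq_one hD (div_ne_zero hx hx₀), div_pow,
        div_eq_one_iff_eq (pow_ne_zero _ hx₀), and_iff_right hx]
  have hsub : D = Polynomial.nthRootsFinset D.card (x₀ ^ D.card) := by
    refine Finset.eq_of_subset_of_card_le (fun x hx => (hroot x).1 (h x hx)) ?_
    rw [Polynomial.nthRootsFinset_def]
    exact (Multiset.toFinset_card_le _).trans (Polynomial.card_nthRoots _ _)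
  rw [hroot, ← hsub]

end Squares

section VerticalCard

variable {α β : Type*}

open scoped Classical in
/-- The number of points of `T` on the vertical line of abscissa `x`. -/
noncomputable def verticalCard (T : Finset (α × β)) (x : α) : ℕ :=
  (T.filter fun u => u.1 = x).card

lemma verticalCard_pos {T : Finset (α × β)} {R : α × β} (hR : R ∈ T) : 0 < verticalCard T R.1 := by
  classical
  exact Finset.card_pos.2 ⟨R, by simp [hR]⟩

lemma verticalCard_eq_one_iff {T : Finset (α × β)} {R : α × β} (hR : R ∈ T) :
    verticalCard T R.1 = 1 ↔ ∀ u ∈ T, u.1 = R.1 → u = R := by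
  classical
  rw [verticalCard, Finset.card_eq_one]
  constructor
  · rintro ⟨u₀, hu₀⟩ u hu hux
    have hmem : ∀ u ∈ T, u.1 = R.1 → u = u₀ := fun u hu hux => by
      simpa [hu₀] using (Finset.mem_filter.2 ⟨hu, hux⟩ : u ∈ T.filter fun u => u.1 = R.1)
    rw [hmem u hu hux, hmem R hR rfl]
  · exact fun h => ⟨R, Finset.eq_singleton_iff_unique_mem.2
      ⟨by simp [hR], fun u hu => h u (Finset.mem_filter.1 hu).1 (Finset.mem_filter.1 hu).2⟩⟩

lemma dvd_card_of_forall_verticalCard_eq {T : Finset (α × β)} {a : ℕ}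
    (h : ∀ R ∈ T, verticalCard T R.1 = a) : a ∣ T.card := by
  classical
  rw [Finset.card_eq_sum_card_image Prod.fst T]
  refine Finset.dvd_sum fun x hx => ?_
  obtain ⟨R, hR, rfl⟩ := Finset.mem_image.1 hx
  rw [← h R hR, verticalCard]

end VerticalCard

section Configuration

open Polynomial Lagrange

variable {F : Type*} [Field F]

/-- The ordinate of the point of the axis `x = 0` on the line of slope `s` through `u`. -/
def intercept (s : F) (u : F × F) : F := u.2 - s * u.1

/-- The slope of the line joining the point `(0, b)` of the axis to the point `u` off the axis. -/
def slopeTo (b : F) (u : F × F) : F := (u.2 - b) / u.1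

lemma intercept_eq_iff_slopeTo_eq {s b : F} {u : F × F} (hu : u.1 ≠ 0) :
    intercept s u = b ↔ slopeTo b u = s := by
  rw [intercept, slopeTo, div_eq_iff hu, sub_eq_iff_eq_add, sub_eq_iff_eq_add, add_comm]

lemma sub_intercept_eq {s b : F} {u : F × F} (hu : u.1 ≠ 0) :
    b - intercept s u = u.1 * (s - slopeTo b u) := by
  rw [intercept, slopeTo]
  field_simp
  ring

lemma derivative_nodal_slopeTo {B : Finset F} {b : F} (hb : b ∈ B) (R : F × F) :
    (derivative (nodal B (slopeTo · R))).eval (slopeTo b R) =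
      (-R.1⁻¹) ^ (B.card - 1) * (derivative (nodal B id)).eval b := by
  classical
  have hslope := eval_nodal_derivative_eval_node_eq (v := (slopeTo · R)) hb
  have hid := eval_nodal_derivative_eval_node_eq (v := (id : F → F)) hb
  rw [id] at hid
  rw [hslope, hid, eval_nodal, eval_nodal, ← Finset.card_erase_of_mem hb, ← Finset.prod_const,
    ← Finset.prod_mul_distrib]
  refine Finset.prod_congr rfl fun b' _ => ?_
  simp only [slopeTo, id, div_eq_mul_inv]
  ring

/-- The line of slope `s` through `R` meets one of the sets `D` (slopes of points at infinity),
`B` (ordinates of points on the axis) and `T` (further affine points) outside `R`. -/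
def Joins (D B : Finset F) (T : Finset (F × F)) (R : F × F) (s : F) : Prop :=
  s ∈ D ∨ intercept s R ∈ B ∨ ∃ u ∈ T, u ≠ R ∧ intercept s u = intercept s R

open scoped Classical in
/-- The product of the linear forms, in the slope, of the points of `T` seen from `R`. -/
noncomputable def pencil (T : Finset (F × F)) (R : F × F) : F[X] :=
  ∏ u ∈ T.erase R, (C (u.1 - R.1) * X - C (u.2 - R.2))

/-- The polynomial whose roots are the slopes `s` with `Joins D B T R s`. -/
noncomputable def joinPoly (D B : Finset F) (T : Finset (F × F)) (R : F × F) : F[X] :=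
  pencil T R * nodal D id * nodal B (slopeTo · R)

open scoped Classical in
lemma eval_pencil_intercept (T : Finset (F × F)) (R : F × F) (s : F) :
    (pencil T R).eval s = (nodal (T.erase R) (intercept s)).eval (intercept s R) := by
  rw [pencil, eval_prod, eval_nodal]
  refine Finset.prod_congr rfl fun u _ => ?_
  simp only [eval_sub, eval_mul, eval_C, eval_X, intercept]
  ring

lemma pencil_ne_zero (T : Finset (F × F)) (R : F × F) : pencil T R ≠ 0 := by
  classical
  refine Finset.prod_ne_zero_iff.2 fun u hu h0 => ?_
  refine Finset.ne_of_mem_erase hu (Prod.ext (sub_eq_zero.1 ?_) (sub_eq_zero.1 ?_).symm)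
  · simpa using congrArg (coeff · 1) h0
  · simpa using congrArg (coeff · 0) h0

lemma natDegree_pencil_add (T : Finset (F × F)) {R : F × F} (hR : R ∈ T) :
    (pencil T R).natDegree + verticalCard T R.1 = T.card := by
  classical
  have hdeg : ∀ u ∈ T.erase R, (C (u.1 - R.1) * X - C (u.2 - R.2) : F[X]).natDegree =
      if u.1 = R.1 then 0 else 1 := by
    intro u _
    split_ifs with hu
    · simp [hu]
    · rw [natDegree_sub_C, natDegree_C_mul_X _ (sub_ne_zero.2 hu)]
  have hsplit := Finset.card_filter_add_card_filter_not (s := T.erase R) (fun u => u.1 = R.1)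
  have hfibre : verticalCard T R.1 = ((T.erase R).filter fun u => u.1 = R.1).card + 1 := by
    rw [verticalCard, ← Finset.card_insert_of_notMem (a := R) (by simp), Finset.filter_erase,
      Finset.insert_erase (by simp [hR])]
  have hcard := Finset.card_erase_add_one hR
  have hsum : (pencil T R).natDegree = ((T.erase R).filter fun u => ¬u.1 = R.1).card := by
    rw [pencil, natDegree_prod _ _ (Finset.prod_ne_zero_iff.1 (pencil_ne_zero T R)),
      Finset.sum_congr rfl hdeg, Finset.card_filter]
    simp only [ite_not]
  omega

lemma joinPoly_ne_zero (D B : Finset F) (T : Finset (F × F)) (R : F × F) :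
    joinPoly D B T R ≠ 0 :=
  mul_ne_zero (mul_ne_zero (pencil_ne_zero T R) nodal_ne_zero) nodal_ne_zero

lemma natDegree_joinPoly_add (D B : Finset F) {T : Finset (F × F)} {R : F × F} (hR : R ∈ T) :
    (joinPoly D B T R).natDegree + verticalCard T R.1 = T.card + D.card + B.card := by
  have hdeg := natDegree_pencil_add T hR
  rw [joinPoly, natDegree_mul (mul_ne_zero (pencil_ne_zero T R) nodal_ne_zero) nodal_ne_zero,
    natDegree_mul (pencil_ne_zero T R) nodal_ne_zero, natDegree_nodal, natDegree_nodal]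
  omega

lemma joinPoly_eval_eq_zero_iff {D B : Finset F} {T : Finset (F × F)} {R : F × F} (hR : R.1 ≠ 0)
    (s : F) : (joinPoly D B T R).eval s = 0 ↔ Joins D B T R s := by
  rw [joinPoly, eval_mul, eval_mul, mul_eq_zero, mul_eq_zero, eval_pencil_intercept,
    eval_nodal_eq_zero_iff, eval_nodal_eq_zero_iff, eval_nodal_eq_zero_iff, Joins]
  simp only [← intercept_eq_iff_slopeTo_eq hR, Finset.mem_erase, id, exists_eq_right,
    exists_eq_right', and_assoc, and_left_comm]
  exact or_assoc.trans (or_comm.trans or_assoc)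

/-- Coordinate form of the hypotheses on the semioval. The sets `D`, `B` and `T` are those of
`Joins`. The tangents at the points of `D` pass through the affine point `N`, the tangent at
`(0, b)` has slope `m b`, and the tangent at a point of `T` is either vertical or has a slope. -/
structure TwoSecantConfig [Fintype F] (a : ℕ) (D B : Finset F) (T : Finset (F × F)) (N : F × F)
    (m : F → F) : Prop where
  two_lt : 2 < a
  cardD : D.card = a
  cardB : B.card = a
  cardT : T.card + a + 1 = Fintype.card F
  fst_ne : ∀ u ∈ T, u.1 ≠ 0
  tanD : ∀ d ∈ D, ∀ t, t ≠ intercept d N → t ∈ B ∨ ∃ u ∈ T, intercept d u = t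
  tanB : ∀ b ∈ B, ∀ s, s ≠ m b → s ∈ D ∨ ∃ u ∈ T, intercept s u = b
  tanT : ∀ R ∈ T, ((∀ u ∈ T, u.1 = R.1 → u = R) ∧ ∀ s, Joins D B T R s) ∨
    ∃ s₀, (∃ u ∈ T, u ≠ R ∧ u.1 = R.1) ∧ ∀ s, Joins D B T R s ↔ s ≠ s₀

/-- An excess polynomial `ex` of a point `R` of `T`, together with the polynomial `M` vanishing at
the slope of the tangent at `R` (so `M` is constant if that tangent is vertical): the product of the
linear factors given by all joins of `R` and by its tangent exceeds `X ^ q - X` by `ex`. -/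
structure IsExcess [Fintype F] (a : ℕ) (D B : Finset F) (T : Finset (F × F)) (R : F × F)
    (M ex : F[X]) : Prop where
  mul_eq : joinPoly D B T R * M = (X ^ Fintype.card F - X) * ex
  monic : M.Monic
  natDegree_le : M.natDegree ≤ 1
  isCoprime : IsCoprime M ex
  natDegree_add : ex.natDegree + 1 + verticalCard T R.1 = a + M.natDegree
  natDegree_eq_zero_iff : M.natDegree = 0 ↔ verticalCard T R.1 = 1

lemma IsExcess.natDegree_X_mul_linear_mul [Fintype F] {a : ℕ} {D B : Finset F}
    {T : Finset (F × F)} {R : F × F} {M ex : F[X]}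
    (hex : IsExcess a D B T R M ex) (hx : R.1 ≠ 0) :
    (X * (C R.2 - C R.1 * X) * ex).natDegree = ex.natDegree + 2 := by
  have hlinear : (C R.2 - C R.1 * X).natDegree = 1 := by
    rw [← neg_sub, natDegree_neg, natDegree_sub_C, natDegree_C_mul_X _ hx]
  have hlinear₀ : C R.2 - C R.1 * X ≠ 0 := ne_zero_of_natDegree_gt (n := 0) (by omega)
  have hex₀ : ex ≠ 0 := by
    rintro rfl
    exact mul_ne_zero (joinPoly_ne_zero D B T R) hex.monic.ne_zero (hex.mul_eq.trans (mul_zero _))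
  rw [natDegree_mul (mul_ne_zero X_ne_zero hlinear₀) hex₀, natDegree_mul X_ne_zero hlinear₀,
    hlinear, natDegree_X]
  ring

namespace TwoSecantConfig

variable [Fintype F] {a : ℕ} {D B : Finset F} {T : Finset (F × F)} {N : F × F} {m : F → F}

lemma nodal_mul_nodal_intercept (h : TwoSecantConfig a D B T N m) {d : F} (hd : d ∈ D) :
    nodal B id * nodal T (intercept d) * (X - C (intercept d N)) = X ^ Fintype.card F - X :=
  nodal_mul_nodal_mul_X_sub_C_eq (by rw [h.cardB, ← h.cardT]; ring)
    (h.tanD d hd)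

lemma nodal_mul_nodal_slopeTo (h : TwoSecantConfig a D B T N m) {b : F} (hb : b ∈ B) :
    nodal D id * nodal T (slopeTo b) * (X - C (m b)) = X ^ Fintype.card F - X :=
  nodal_mul_nodal_mul_X_sub_C_eq (by rw [h.cardD, ← h.cardT]; ring)
    fun s hs => (h.tanB b hb s hs).imp_right fun ⟨u, hu, hus⟩ =>
      ⟨u, hu, (intercept_eq_iff_slopeTo_eq (h.fst_ne u hu)).1 hus⟩

lemma derivative_nodal_slope_mul (h : TwoSecantConfig a D B T N m) {d b : F} (hd : d ∈ D)
    (hb : b ∈ B) :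
    (derivative (nodal D id)).eval d * ((nodal T (slopeTo b)).eval d * (d - m b)) = -1 := by
  have hfactor := h.nodal_mul_nodal_slopeTo hb
  rw [mul_assoc] at hfactor
  have hderiv := derivative_eval_mul_eval_eq_neg_one hfactor (eval_nodal_at_node (v := id) hd)
  rwa [id, eval_mul, eval_sub, eval_X, eval_C] at hderiv

lemma derivative_nodal_ordinate_mul (h : TwoSecantConfig a D B T N m) {d b : F} (hd : d ∈ D)
    (hb : b ∈ B) :
    (derivative (nodal B id)).eval b *
      ((nodal T (intercept d)).eval b * (b - intercept d N)) = -1 := by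
  have hfactor := h.nodal_mul_nodal_intercept hd
  rw [mul_assoc] at hfactor
  have hderiv := derivative_eval_mul_eval_eq_neg_one hfactor (eval_nodal_at_node (v := id) hb)
  rwa [id, eval_mul, eval_sub, eval_X, eval_C] at hderiv

/-- This compares the lemma of tangents at the points `d` and `b` of the two secants. -/
lemma derivative_relation (h : TwoSecantConfig a D B T N m) {d b : F} (hd : d ∈ D) (hb : b ∈ B) :
    (derivative (nodal D id)).eval d * (d - m b) =
      (derivative (nodal B id)).eval b * (∏ u ∈ T, u.1) * (b - intercept d N) := by
  have hD := h.derivative_nodal_slope_mul hd hb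
  have hB := h.derivative_nodal_ordinate_mul hd hb
  have hT : (nodal T (intercept d)).eval b = (∏ u ∈ T, u.1) * (nodal T (slopeTo b)).eval d := by
    rw [eval_nodal, eval_nodal, ← Finset.prod_mul_distrib]
    exact Finset.prod_congr rfl fun u hu => sub_intercept_eq (h.fst_ne u hu)
  have hne : (nodal T (slopeTo b)).eval d ≠ 0 := by
    intro h0
    simp [h0] at hD
  rw [hT] at hB
  refine mul_right_cancel₀ hne ?_
  linear_combination hD - hB

lemma ne_tangent_slope (h : TwoSecantConfig a D B T N m) {d b : F} (hd : d ∈ D) (hb : b ∈ B) :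
    d ≠ m b := by
  rintro rfl
  simpa using h.derivative_nodal_slope_mul hd hb

lemma nodal_mul_pencil_mul_sub (h : TwoSecantConfig a D B T N m) {d : F} {R : F × F}
    (hd : d ∈ D) (hR : R ∈ T) :
    (nodal B id).eval (intercept d R) * (pencil T R).eval d *
      (intercept d R - intercept d N) = -1 := by
  classical
  have hfactor := h.nodal_mul_nodal_intercept hd
  rw [nodal_eq_mul_nodal_erase hR, mul_left_comm, mul_assoc] at hfactor
  have hderiv := derivative_eval_mul_eval_eq_neg_one hfactor (d := intercept d R) (by simp)
  rwa [derivative_X_sub_C, eval_one, one_mul, eval_mul, eval_mul, eval_sub, eval_X, eval_C,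
    ← eval_pencil_intercept] at hderiv

open scoped Classical in
lemma nodal_mul_nodal_erase_mul_sub (h : TwoSecantConfig a D B T N m) {b : F} {R : F × F}
    (hb : b ∈ B) (hR : R ∈ T) :
    (nodal D id).eval (slopeTo b R) * (nodal (T.erase R) (slopeTo b)).eval (slopeTo b R) *
      (slopeTo b R - m b) = -1 := by
  have hfactor := h.nodal_mul_nodal_slopeTo hb
  rw [nodal_eq_mul_nodal_erase hR, mul_left_comm, mul_assoc] at hfactor
  have hderiv := derivative_eval_mul_eval_eq_neg_one hfactor (d := slopeTo b R) (by simp)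
  rwa [derivative_X_sub_C, eval_one, one_mul, eval_mul, eval_mul, eval_sub, eval_X, eval_C]
    at hderiv

lemma intercept_notMem (h : TwoSecantConfig a D B T N m) {d : F} {R : F × F} (hd : d ∈ D)
    (hR : R ∈ T) : intercept d R ∉ B := by
  intro hB
  have hroot : (nodal B id).eval (intercept d R) = 0 := eval_nodal_at_node (v := id) hB
  simpa [hroot] using h.nodal_mul_pencil_mul_sub hd hR

lemma exists_joinPoly_mul_eq (h : TwoSecantConfig a D B T N m) {R : F × F} (hR : R ∈ T) {M : F[X]}
    (hM : M.Monic) (hroot : ∀ s, (joinPoly D B T R * M).eval s = 0) :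
    ∃ ex : F[X], joinPoly D B T R * M = (X ^ Fintype.card F - X) * ex ∧
      ex.natDegree + 1 + verticalCard T R.1 = a + M.natDegree := by
  obtain ⟨ex, hex⟩ := X_pow_card_sub_X_dvd hroot
  have hjoin : joinPoly D B T R ≠ 0 := joinPoly_ne_zero D B T R
  have hex_ne : ex ≠ 0 := by
    rintro rfl
    exact mul_ne_zero hjoin hM.ne_zero (hex.trans (mul_zero _))
  refine ⟨ex, hex, ?_⟩
  have hdeg := congrArg natDegree hex
  rw [natDegree_mul hjoin hM.ne_zero, monic_X_pow_card_sub_X.natDegree_mul' hex_ne,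
    FiniteField.X_pow_card_sub_X_natDegree_eq F Fintype.one_lt_card] at hdeg
  have hjoin_deg := natDegree_joinPoly_add D B hR
  have := h.cardT
  have := h.cardD
  have := h.cardB
  omega

/-- The tangent is a simple factor of the left-hand side. -/
lemma isCoprime_X_sub_C_of_joinPoly_mul_eq {R : F × F} {s₀ : F} {ex : F[X]}
    (hs₀ : (joinPoly D B T R).eval s₀ ≠ 0)
    (hex : joinPoly D B T R * (X - C s₀) = (X ^ Fintype.card F - X) * ex) :
    IsCoprime (X - C s₀) ex := by
  rw [(irreducible_X_sub_C s₀).coprime_iff_not_dvd, dvd_iff_isRoot, IsRoot.def]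
  intro hroot
  have hderiv := derivative_eval_mul_eval_eq_neg ((mul_comm _ _).trans hex) (d := s₀) (by simp)
  rw [derivative_X_sub_C, eval_one, one_mul, hroot, neg_zero] at hderiv
  exact hs₀ hderiv

theorem exists_isExcess (h : TwoSecantConfig a D B T N m) {R : F × F} (hR : R ∈ T) :
    ∃ M ex : F[X], IsExcess a D B T R M ex := by
  have hx := h.fst_ne R hR
  rcases h.tanT R hR with ⟨hfibre, hjoins⟩ | ⟨s₀, hfibre, hjoins⟩
  · obtain ⟨ex, hex, hdeg⟩ := h.exists_joinPoly_mul_eq hR monic_one fun s => by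
      rw [mul_one, joinPoly_eval_eq_zero_iff hx]
      exact hjoins s
    exact ⟨1, ex, hex, monic_one, by simp, isCoprime_one_left, hdeg,
      by simpa using (verticalCard_eq_one_iff hR).2 hfibre⟩
  · obtain ⟨ex, hex, hdeg⟩ := h.exists_joinPoly_mul_eq hR (monic_X_sub_C s₀) fun s => by
      rw [eval_mul, mul_eq_zero, joinPoly_eval_eq_zero_iff hx, hjoins, eval_sub, eval_X, eval_C,
        sub_eq_zero]
      exact (em (s = s₀)).symm
    have hs₀ : (joinPoly D B T R).eval s₀ ≠ 0 := by
      rw [ne_eq, joinPoly_eval_eq_zero_iff hx, hjoins]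
      exact not_not.2 rfl
    refine ⟨X - C s₀, ex, hex, monic_X_sub_C s₀, (natDegree_X_sub_C s₀).le,
      isCoprime_X_sub_C_of_joinPoly_mul_eq hs₀ hex, hdeg, ?_⟩
    rw [natDegree_X_sub_C, verticalCard_eq_one_iff hR]
    obtain ⟨u, hu, huR, hux⟩ := hfibre
    exact ⟨fun h0 => absurd h0 one_ne_zero, fun h1 => absurd (h1 u hu hux) huR⟩

lemma excess_relation_slope (h : TwoSecantConfig a D B T N m) {R : F × F} (hR : R ∈ T)
    {M ex : F[X]} (hex : IsExcess a D B T R M ex) {d : F} (hd : d ∈ D) :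
    (derivative (nodal D id)).eval d * M.eval d =
      (-R.1) ^ a * ex.eval d * (intercept d R - intercept d N) := by
  have hjoin := hex.mul_eq
  rw [joinPoly, mul_comm (pencil T R), mul_assoc, mul_assoc] at hjoin
  have hderiv := derivative_eval_mul_eval_eq_neg hjoin (eval_nodal_at_node (v := id) hd)
  rw [id, eval_mul, eval_mul] at hderiv
  have hnodal : (nodal B id).eval (intercept d R) =
      (-R.1) ^ a * (nodal B (slopeTo · R)).eval d := by
    rw [eval_nodal, eval_nodal, ← h.cardB, ← Finset.prod_const, ← Finset.prod_mul_distrib]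
    exact Finset.prod_congr rfl fun b _ => by
      simp only [id]
      linear_combination -sub_intercept_eq (s := d) (b := b) (h.fst_ne R hR)
  have htangent := h.nodal_mul_pencil_mul_sub hd hR
  rw [hnodal] at htangent
  linear_combination ((derivative (nodal D id)).eval d * M.eval d) * htangent -
    ((-R.1) ^ a * (intercept d R - intercept d N)) * hderiv

open scoped Classical in
lemma excess_relation_ordinate (h : TwoSecantConfig a D B T N m) {R : F × F} (hR : R ∈ T)
    {M ex : F[X]} (hex : IsExcess a D B T R M ex) {b : F} (hb : b ∈ B) :
    (derivative (nodal B (slopeTo · R))).eval (slopeTo b R) * (∏ u ∈ T.erase R, u.1) *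
      M.eval (slopeTo b R) = ex.eval (slopeTo b R) * (slopeTo b R - m b) := by
  have hjoin := hex.mul_eq
  rw [joinPoly, mul_comm (pencil T R * _), mul_assoc, mul_assoc] at hjoin
  have hderiv := derivative_eval_mul_eval_eq_neg hjoin
    (eval_nodal_at_node (v := (slopeTo · R)) hb)
  rw [eval_mul, eval_mul] at hderiv
  have hintercept : intercept (slopeTo b R) R = b :=
    (intercept_eq_iff_slopeTo_eq (h.fst_ne R hR)).2 rfl
  have hpencil : (pencil T R).eval (slopeTo b R) = (∏ u ∈ T.erase R, u.1) *
      (nodal (T.erase R) (slopeTo b)).eval (slopeTo b R) := by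
    rw [eval_pencil_intercept, eval_nodal, eval_nodal, ← Finset.prod_mul_distrib, hintercept]
    exact Finset.prod_congr rfl fun u hu =>
      sub_intercept_eq (h.fst_ne u (Finset.mem_of_mem_erase hu))
  have htangent := h.nodal_mul_nodal_erase_mul_sub hb hR
  rw [hpencil] at hderiv
  linear_combination ((derivative (nodal B (slopeTo · R))).eval (slopeTo b R) *
    (∏ u ∈ T.erase R, u.1) * M.eval (slopeTo b R)) * htangent - (slopeTo b R - m b) * hderiv

lemma nonempty_slopes (h : TwoSecantConfig a D B T N m) : D.Nonempty :=
  Finset.card_pos.1 (by have := h.two_lt; rw [h.cardD]; omega)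

lemma nonempty_ordinates (h : TwoSecantConfig a D B T N m) : B.Nonempty :=
  Finset.card_pos.1 (by have := h.two_lt; rw [h.cardB]; omega)

lemma natDegree_excess_add_two_le (h : TwoSecantConfig a D B T N m) {R : F × F} (hR : R ∈ T)
    {M ex : F[X]} (hex : IsExcess a D B T R M ex) : ex.natDegree + 2 ≤ a := by
  have := h.two_lt
  have hpos := verticalCard_pos hR
  have hiff := hex.natDegree_eq_zero_iff
  have hdeg := hex.natDegree_add
  have hM := hex.natDegree_le
  omega

lemma C_mul_eq_excess_mul_of_derivative_const (h : TwoSecantConfig a D B T N m) {c : F}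
    (hc : ∀ d ∈ D, (derivative (nodal D id)).eval d = c) {R : F × F} (hR : R ∈ T) {M ex : F[X]}
    (hex : IsExcess a D B T R M ex) :
    C c * M = C ((-R.1) ^ a) * (ex * (C (N.1 - R.1) * X - C (N.2 - R.2))) := by
  refine eq_of_degree_sub_lt_of_eval_index_eq D (v := id) Function.injective_id.injOn ?_
    fun d hd => ?_
  · have hex_deg := h.natDegree_excess_add_two_le hR hex
    have hM_deg := hex.natDegree_le
    have hlinear : (C (N.1 - R.1) * X - C (N.2 - R.2)).natDegree ≤ 1 := by compute_degree
    have hleft := natDegree_C_mul_le c M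
    have hright := (natDegree_C_mul_le ((-R.1) ^ a) _).trans
      (natDegree_mul_le (p := ex) (q := C (N.1 - R.1) * X - C (N.2 - R.2)))
    have hsub := natDegree_sub_le (C c * M)
      (C ((-R.1) ^ a) * (ex * (C (N.1 - R.1) * X - C (N.2 - R.2))))
    refine degree_le_natDegree.trans_lt (Nat.cast_lt.2 ?_)
    rw [h.cardD]
    omega
  · have hrel := h.excess_relation_slope hR hex hd
    rw [hc d hd] at hrel
    simp only [id, eval_sub, eval_mul, eval_C, eval_X]
    simp only [intercept] at hrel
    linear_combination hrel

lemma verticalCard_eq_of_derivative_const (h : TwoSecantConfig a D B T N m) {c : F} (hc₀ : c ≠ 0)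
    (hc : ∀ d ∈ D, (derivative (nodal D id)).eval d = c) {R : F × F} (hR : R ∈ T) :
    verticalCard T R.1 = a := by
  obtain ⟨M, ex, hex⟩ := h.exists_isExcess hR
  have hdvd : ex ∣ C c * M := by
    rw [h.C_mul_eq_excess_mul_of_derivative_const hc hR hex]
    exact (dvd_mul_right _ _).mul_left _
  rw [(isUnit_C.2 hc₀.isUnit).dvd_mul_left] at hdvd
  have hunit : IsUnit ex := hex.isCoprime.isUnit_of_dvd' hdvd dvd_rfl
  have hex_deg := natDegree_eq_zero_of_isUnit hunit
  have := h.two_lt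
  have hiff := hex.natDegree_eq_zero_iff
  have hdeg := hex.natDegree_add
  have hM := hex.natDegree_le
  omega

/-- Otherwise `a = 0` in `F`, and the vertical lines split `T` into classes of size `a`. -/
lemma derivative_not_const (h : TwoSecantConfig a D B T N m) {c : F}
    (hc : ∀ d ∈ D, (derivative (nodal D id)).eval d = c) : False := by
  have ha : (a : F) = 0 := by
    have := h.two_lt
    rw [← h.cardD]
    exact card_eq_zero_of_derivative_const (by rw [h.cardD]; omega) hc
  obtain ⟨d, hd⟩ := h.nonempty_slopes
  have hc₀ : c ≠ 0 := hc d hd ▸ derivative_nodal_eval_ne_zero hd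
  obtain ⟨k, hk⟩ := dvd_card_of_forall_verticalCard_eq fun R hR =>
    h.verticalCard_eq_of_derivative_const hc₀ hc hR
  have hcard := congrArg (Nat.cast (R := F)) h.cardT
  rw [hk, FiniteField.cast_card_eq_zero] at hcard
  push_cast at hcard
  simp [ha] at hcard

lemma exists_derivative_mul_sub_eq (h : TwoSecantConfig a D B T N m) :
    ∃ β : F → F, ∀ b ∈ B, β b ≠ 0 ∧
      ∀ d ∈ D, (derivative (nodal D id)).eval d * (d - m b) = β b * (d * N.1 + (b - N.2)) := by
  refine ⟨fun b => (derivative (nodal B id)).eval b * ∏ u ∈ T, u.1, fun b hb =>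
    ⟨mul_ne_zero (derivative_nodal_eval_ne_zero hb) (Finset.prod_ne_zero_iff.2 h.fst_ne),
      fun d hd => ?_⟩⟩
  rw [h.derivative_relation hd hb, intercept]
  ring

/-- If `N.1 ≠ 0`, every tangent at a point of the axis passes through `N` too, and this forces the
derivative of `nodal D id` to be constant on `D`. -/
theorem nucleus_fst_eq_zero (h : TwoSecantConfig a D B T N m) : N.1 = 0 := by
  by_contra hN
  obtain ⟨β, hβ⟩ := h.exists_derivative_mul_sub_eq
  have hD : 2 < D.card := h.cardD ▸ h.two_lt
  obtain ⟨b, hb⟩ := h.nonempty_ordinates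
  obtain ⟨b', hb', hbb'⟩ := Finset.exists_mem_ne (by have := h.two_lt; rw [h.cardB]; omega) b
  obtain ⟨hquad, hlin, hconst⟩ := coeff_eq_zero_of_mul_sub_eq hD
    (fun d hd => derivative_nodal_eval_ne_zero hd) (hβ b hb).2 (hβ b' hb').2
  have hβ_eq : β b' = β b := sub_eq_zero.1 ((mul_eq_zero.1 hquad).resolve_left hN)
  have hβ₀ : β b ≠ 0 := (hβ b hb).1
  rw [hβ_eq] at hlin hconst
  have hlin' : b' - N.2 - N.1 * m b - (b - N.2 - N.1 * m b') = 0 :=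
    mul_left_cancel₀ hβ₀ (by linear_combination hlin)
  have hconst' : m b' * (b - N.2) - m b * (b' - N.2) = 0 :=
    mul_left_cancel₀ hβ₀ (by linear_combination hconst)
  have htangent : b - N.2 = -(m b * N.1) := by
    refine mul_left_cancel₀ (sub_ne_zero.2 hbb') ?_
    linear_combination (b - N.2) * hlin' - N.1 * hconst'
  refine h.derivative_not_const (c := β b * N.1) fun d hd => ?_
  refine mul_right_cancel₀ (sub_ne_zero.2 (h.ne_tangent_slope hd hb)) ?_
  rw [(hβ b hb).2 d hd]
  linear_combination β b * htangent

theorem tangent_slope_eq (h : TwoSecantConfig a D B T N m) {b b' : F} (hb : b ∈ B) (hb' : b' ∈ B) :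
    m b = m b' := by
  obtain ⟨β, hβ⟩ := h.exists_derivative_mul_sub_eq
  have hD : 2 < D.card := h.cardD ▸ h.two_lt
  obtain ⟨-, hlin, hconst⟩ := coeff_eq_zero_of_mul_sub_eq hD
    (fun d hd => derivative_nodal_eval_ne_zero hd) (hβ b hb).2 (hβ b' hb').2
  rw [h.nucleus_fst_eq_zero] at hlin
  have hβ₀ : β b ≠ 0 := (hβ b hb).1
  have hb_ne : b - N.2 ≠ 0 := by
    intro h0
    obtain ⟨d, hd⟩ := h.nonempty_slopes
    have hrel := (hβ b hb).2 d hd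
    rw [h.nucleus_fst_eq_zero, h0, mul_zero, add_zero, mul_zero] at hrel
    exact (mul_ne_zero (derivative_nodal_eval_ne_zero hd)
      (sub_ne_zero.2 (h.ne_tangent_slope hd hb))) hrel
  refine mul_left_cancel₀ (mul_ne_zero hβ₀ hb_ne) ?_
  linear_combination (-hconst) - m b * hlin

lemma exists_mul_derivative_const (h : TwoSecantConfig a D B T 0 m) (hm : ∀ b ∈ B, m b = 0) :
    ∃ c ≠ 0, (∀ d ∈ D, d * (derivative (nodal D id)).eval d = c) ∧
      ∀ b ∈ B, b * (derivative (nodal B id)).eval b = c / ∏ u ∈ T, u.1 := by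
  have hrel : ∀ d ∈ D, ∀ b ∈ B, d * (derivative (nodal D id)).eval d =
      b * (derivative (nodal B id)).eval b * ∏ u ∈ T, u.1 := fun d hd b hb => by
    have := h.derivative_relation hd hb
    simp only [hm b hb, intercept, Prod.snd_zero, Prod.fst_zero] at this
    linear_combination this
  obtain ⟨d, hd⟩ := h.nonempty_slopes
  obtain ⟨b, hb⟩ := h.nonempty_ordinates
  have hd₀ : d ≠ 0 := hm b hb ▸ h.ne_tangent_slope hd hb
  refine ⟨d * (derivative (nodal D id)).eval d, mul_ne_zero hd₀ (derivative_nodal_eval_ne_zero hd),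
    fun d' hd' => (hrel d' hd' b hb).trans (hrel d hd b hb).symm, fun b' hb' => ?_⟩
  rw [hrel d hd b' hb', mul_div_cancel_right₀ _ (Finset.prod_ne_zero_iff.2 h.fst_ne)]

lemma coeff_X_mul_linear_mul_excess_eq_zero (h : TwoSecantConfig a D B T 0 m) {c : F}
    (hc : ∀ d ∈ D, d * (derivative (nodal D id)).eval d = c) (hsum : ∑ d ∈ D, d = 0)
    {R : F × F} (hR : R ∈ T) {M ex : F[X]} (hex : IsExcess a D B T R M ex) :
    (X * (C R.2 - C R.1 * X) * ex).coeff (a - 1) = 0 := by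
  have ha := h.two_lt
  have hx := h.fst_ne R hR
  have hM := hex.natDegree_le
  set P : F[X] := X * (C R.2 - C R.1 * X) * ex with hP
  have hP_deg : P.natDegree ≤ a :=
    (hex.natDegree_X_mul_linear_mul hx).trans_le (h.natDegree_excess_add_two_le hR hex)
  have hQ_le : (C ((-R.1) ^ a) * P - C c * M).natDegree ≤ D.card := by
    rw [h.cardD]
    exact (natDegree_sub_le _ _).trans
      (max_le ((natDegree_C_mul_le _ _).trans hP_deg) ((natDegree_C_mul_le _ _).trans (by omega)))
  have hroots : ∀ d ∈ D, (C ((-R.1) ^ a) * P - C c * M).eval (id d) = 0 := fun d hd => by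
    have hrel := h.excess_relation_slope hR hex hd
    simp only [intercept, Prod.snd_zero, Prod.fst_zero] at hrel
    simp only [hP, id, eval_sub, eval_mul, eval_C, eval_X]
    linear_combination (-d) * hrel + M.eval d * hc d hd
  have hvieta := coeff_card_sub_one_eq_neg_coeff_card_mul_sum Function.injective_id.injOn
    (by rw [h.cardD]; omega) hQ_le hroots
  have hM_coeff : M.coeff (a - 1) = 0 := coeff_eq_zero_of_natDegree_lt (by omega)
  simpa only [id, hsum, mul_zero, neg_zero, h.cardD, coeff_sub, coeff_C_mul, hM_coeff, sub_zero,
    mul_eq_zero, pow_eq_zero_iff (show a ≠ 0 by omega), neg_eq_zero, hx, false_or] using hvieta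

lemma sum_slopeTo_eq_zero (h : TwoSecantConfig a D B T 0 m) (hm : ∀ b ∈ B, m b = 0) {c : F}
    (hc : ∀ b ∈ B, b * (derivative (nodal B id)).eval b = c) {R : F × F} (hR : R ∈ T)
    {M ex : F[X]} (hex : IsExcess a D B T R M ex)
    (hcoeff : (X * (C R.2 - C R.1 * X) * ex).coeff (a - 1) = 0) :
    ∑ b ∈ B, slopeTo b R = 0 := by
  classical
  have ha := h.two_lt
  have hx := h.fst_ne R hR
  have hM := hex.natDegree_le
  set P : F[X] := X * (C R.2 - C R.1 * X) * ex with hP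
  have hP_deg : P.natDegree = ex.natDegree + 2 := hex.natDegree_X_mul_linear_mul hx
  set c' := (-R.1⁻¹) ^ (a - 1) * c * ∏ u ∈ T.erase R, u.1 with hc'
  have hM_deg : (C c' * M).natDegree < P.natDegree :=
    (natDegree_C_mul_le _ _).trans_lt (by omega)
  have hinj : Set.InjOn (slopeTo · R) (B : Set F) := fun b _ b' _ hbb' => by
    simpa [slopeTo, div_left_inj' hx] using hbb'
  have hQ_deg : (P - C c' * M).natDegree = ex.natDegree + 2 := by
    rw [natDegree_sub_eq_left_of_natDegree_lt hM_deg, hP_deg]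
  have hQ_le : (P - C c' * M).natDegree ≤ B.card := by
    rw [hQ_deg, h.cardB]
    exact h.natDegree_excess_add_two_le hR hex
  have hroots : ∀ b ∈ B, (P - C c' * M).eval (slopeTo b R) = 0 := fun b hb => by
    have hrel := h.excess_relation_ordinate hR hex hb
    have hb_eq : R.2 - R.1 * slopeTo b R = b := by rw [slopeTo, mul_div_cancel₀ _ hx]; ring
    rw [derivative_nodal_slopeTo hb, h.cardB, hm b hb, sub_zero] at hrel
    simp only [hP, eval_sub, eval_mul, eval_C, eval_X, hb_eq, hc', ← hc b hb]
    linear_combination (-b) * hrel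
  have hvieta := coeff_card_sub_one_eq_neg_coeff_card_mul_sum hinj (by rw [h.cardB]; omega) hQ_le
    hroots
  have hM_coeff : M.coeff (a - 1) = 0 := coeff_eq_zero_of_natDegree_lt (by omega)
  have hlead : (P - C c' * M).coeff a ≠ 0 := by
    intro h0
    have := eq_C_mul_nodal hinj hQ_le hroots
    rw [h.cardB, h0, C_0, zero_mul] at this
    simp [this] at hQ_deg
  rw [h.cardB, coeff_sub, coeff_C_mul, hcoeff, hM_coeff, mul_zero, sub_zero, zero_eq_neg] at hvieta
  exact (mul_eq_zero.1 hvieta).resolve_left hlead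

/-- The points of `T` lie on the line `y = 0` joining the two nuclei. -/
theorem snd_eq_zero (h : TwoSecantConfig a D B T 0 m) (hm : ∀ b ∈ B, m b = 0) {R : F × F}
    (hR : R ∈ T) : R.2 = 0 := by
  have ha := h.two_lt
  obtain ⟨c, hc₀, hcD, hcB⟩ := h.exists_mul_derivative_const hm
  obtain ⟨haF, hsumD⟩ := sum_eq_zero_of_mul_derivative_const (by rw [h.cardD]; omega) hc₀ hcD
  obtain ⟨-, hsumB⟩ := sum_eq_zero_of_mul_derivative_const (by rw [h.cardB]; omega)
    (div_ne_zero hc₀ (Finset.prod_ne_zero_iff.2 h.fst_ne)) hcB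
  obtain ⟨M, ex, hex⟩ := h.exists_isExcess hR
  have hsum := h.sum_slopeTo_eq_zero hm hcB hR hex
    (h.coeff_X_mul_linear_mul_excess_eq_zero hcD hsumD hR hex)
  simp only [slopeTo] at hsum
  rw [← Finset.sum_div, div_eq_zero_iff, or_iff_left (h.fst_ne R hR), Finset.sum_sub_distrib, hsumB,
    sub_zero, Finset.sum_const, h.cardB, nsmul_eq_mul] at hsum
  exact (mul_eq_zero.1 hsum).resolve_left (h.cardD ▸ haF)

lemma zero_notMem_slopes (h : TwoSecantConfig a D B T N m) (hm : ∀ b ∈ B, m b = 0) : 0 ∉ D := by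
  intro h0
  obtain ⟨b, hb⟩ := h.nonempty_ordinates
  exact h.ne_tangent_slope h0 hb (hm b hb).symm

lemma zero_notMem_ordinates (h : TwoSecantConfig a D B T 0 m) : 0 ∉ B := by
  intro h0
  obtain ⟨d, hd⟩ := h.nonempty_slopes
  simpa [intercept] using h.derivative_nodal_ordinate_mul hd h0

lemma mem_slopes_iff (h : TwoSecantConfig a D B T 0 m) (hm : ∀ b ∈ B, m b = 0) {R : F × F}
    (hR : R ∈ T) {s : F} (hs : s ≠ 0) : s ∈ D ↔ -(s * R.1) ∉ B := by
  have hsnd : ∀ u ∈ T, u.2 = 0 := fun u hu => h.snd_eq_zero hm hu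
  have hinj : ∀ u ∈ T, u.1 = R.1 → u = R := fun u hu hux =>
    Prod.ext hux ((hsnd u hu).trans (hsnd R hR).symm)
  have hintercept : ∀ u ∈ T, intercept s u = -(s * u.1) := fun u hu => by
    rw [intercept, hsnd u hu, zero_sub]
  rw [← hintercept R hR]
  refine ⟨fun hsD => h.intercept_notMem hsD hR, fun hsB => ?_⟩
  rcases h.tanT R hR with ⟨-, hjoins⟩ | ⟨-, ⟨u, hu, huR, hux⟩, -⟩
  · rcases hjoins s with hsD | hsB' | ⟨u, hu, huR, hus⟩
    · exact hsD
    · exact absurd hsB' hsB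
    · rw [hintercept u hu, hintercept R hR, neg_inj] at hus
      exact absurd (hinj u hu (mul_left_cancel₀ hs hus)) huR
  · exact absurd (hinj u hu hux) huR

lemma two_mul_card_slopes_add_one (h : TwoSecantConfig a D B T 0 m) (hm : ∀ b ∈ B, m b = 0)
    (hT : T.Nonempty) : 2 * D.card + 1 = Fintype.card F := by
  classical
  obtain ⟨R, hR⟩ := hT
  have hR₀ := h.fst_ne R hR
  have hcompl : B = (insert 0 (D.image fun s => -(s * R.1)))ᶜ := by
    ext b
    rcases eq_or_ne b 0 with rfl | hb
    · simpa using h.zero_notMem_ordinates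
    · have hiff := h.mem_slopes_iff hm hR (s := -(b / R.1)) (by simp [hb, hR₀])
      rw [neg_mul, neg_neg, div_mul_cancel₀ _ hR₀] at hiff
      have himage : b ∈ D.image (fun s => -(s * R.1)) ↔ -(b / R.1) ∈ D := by
        simp only [Finset.mem_image, neg_eq_iff_eq_neg, ← eq_div_iff hR₀, neg_div,
          exists_eq_right]
      rw [Finset.mem_compl, Finset.mem_insert, or_iff_right hb, himage, hiff, not_not]
  have hinj : Function.Injective fun s => -(s * R.1) :=
    neg_injective.comp (mul_left_injective₀ hR₀)
  have hcard := congrArg Finset.card hcompl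
  rw [Finset.card_compl, Finset.card_insert_of_notMem
    (by simpa [hR₀] using h.zero_notMem_slopes hm), Finset.card_image_of_injective _ hinj,
    h.cardB, h.cardD] at hcard
  have := h.two_lt
  rw [h.cardD]
  omega

lemma mul_div_mem_slopes (h : TwoSecantConfig a D B T 0 m) (hm : ∀ b ∈ B, m b = 0) {R R' : F × F}
    (hR : R ∈ T) (hR' : R' ∈ T) {d : F} (hd : d ∈ D) : d * (R'.1 / R.1) ∈ D := by
  have hd₀ : d ≠ 0 := ne_of_mem_of_not_mem hd (h.zero_notMem_slopes hm)
  rw [h.mem_slopes_iff hm hR (mul_ne_zero hd₀ (div_ne_zero (h.fst_ne R' hR') (h.fst_ne R hR))),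
    mul_assoc, div_mul_cancel₀ _ (h.fst_ne R hR)]
  exact (h.mem_slopes_iff hm hR' hd₀).1 hd

open scoped Classical in
lemma card_image_fst (h : TwoSecantConfig a D B T 0 m) (hm : ∀ b ∈ B, m b = 0)
    (hT : T.Nonempty) : (T.image Prod.fst).card = D.card := by
  have hinj : Set.InjOn Prod.fst (T : Set (F × F)) := fun u hu v hv huv =>
    Prod.ext huv ((h.snd_eq_zero hm hu).trans (h.snd_eq_zero hm hv).symm)
  have := h.two_mul_card_slopes_add_one hm hT
  have := h.cardT
  have := h.cardD
  rw [Finset.card_image_of_injOn hinj]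
  omega

lemma mem_iff_isSquare_fst_div (h : TwoSecantConfig a D B T 0 m) (hm : ∀ b ∈ B, m b = 0)
    {R : F × F} (hR : R ∈ T) (u : F × F) :
    u ∈ T ↔ u.2 = 0 ∧ u.1 ≠ 0 ∧ IsSquare (u.1 / R.1) := by
  classical
  have hcard := h.two_mul_card_slopes_add_one hm ⟨R, hR⟩
  have himage := mem_iff_isSquare_div ((h.card_image_fst hm ⟨R, hR⟩).symm ▸ hcard) (h.fst_ne R hR)
    (fun x hx => by
      obtain ⟨u, hu, rfl⟩ := Finset.mem_image.1 hx
      exact ⟨h.fst_ne u hu, isSquare_of_forall_mul_mem hcard (h.zero_notMem_slopes hm)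
        (div_ne_zero (h.fst_ne u hu) (h.fst_ne R hR)) fun d hd => h.mul_div_mem_slopes hm hR hu hd⟩)
    u.1
  rw [← himage, Finset.mem_image]
  refine ⟨fun hu => ⟨h.snd_eq_zero hm hu, u, hu, rfl⟩, ?_⟩
  rintro ⟨hu, v, hv, hvu⟩
  rwa [show u = v from Prod.ext hvu.symm (hu.trans (h.snd_eq_zero hm hv).symm)]

lemma mem_slopes_iff_isSquare_div (h : TwoSecantConfig a D B T 0 m) (hm : ∀ b ∈ B, m b = 0)
    (hT : T.Nonempty) {d : F} (hd : d ∈ D) (s : F) : s ∈ D ↔ s ≠ 0 ∧ IsSquare (s / d) := by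
  classical
  obtain ⟨R, hR⟩ := hT
  have hd₀ : d ≠ 0 := ne_of_mem_of_not_mem hd (h.zero_notMem_slopes hm)
  have hinj : Function.Injective fun x => d * (x / R.1) := fun x y hxy => by
    simpa [hd₀, h.fst_ne R hR] using hxy
  have himage : (T.image Prod.fst).image (fun x => d * (x / R.1)) = D := by
    refine Finset.eq_of_subset_of_card_le (Finset.image_subset_iff.2 fun x hx => ?_) ?_
    · obtain ⟨u, hu, rfl⟩ := Finset.mem_image.1 hx
      exact h.mul_div_mem_slopes hm hR hu hd
    · rw [Finset.card_image_of_injective _ hinj, h.card_image_fst hm ⟨R, hR⟩]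
  refine mem_iff_isSquare_div (h.two_mul_card_slopes_add_one hm ⟨R, hR⟩) hd₀ (fun s hs => ?_) s
  refine ⟨ne_of_mem_of_not_mem hs (h.zero_notMem_slopes hm), ?_⟩
  rw [← himage, Finset.image_image] at hs
  obtain ⟨u, hu, rfl⟩ := Finset.mem_image.1 hs
  rw [Function.comp_apply, mul_div_cancel_left₀ _ hd₀]
  exact ((h.mem_iff_isSquare_fst_div hm hR u).1 hu).2.2

lemma mem_ordinates_iff_not_isSquare (h : TwoSecantConfig a D B T 0 m) (hm : ∀ b ∈ B, m b = 0)
    {R : F × F} (hR : R ∈ T) {d : F} (hd : d ∈ D) (b : F) :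
    b ∈ B ↔ ¬IsSquare (-(R.1 * d / b)) := by
  rcases eq_or_ne b 0 with rfl | hb
  · simpa using h.zero_notMem_ordinates
  have hx := h.fst_ne R hR
  have hs : -(b / R.1) ≠ 0 := by simp [hb, hx]
  have hiff := h.mem_slopes_iff hm hR hs
  rw [neg_mul, neg_neg, div_mul_cancel₀ _ hx, h.mem_slopes_iff_isSquare_div hm ⟨R, hR⟩ hd,
    and_iff_right hs] at hiff
  rw [← isSquare_inv, show (-(R.1 * d / b))⁻¹ = -(b / R.1) / d by
    rw [inv_neg, inv_div, neg_div, div_div], hiff, not_not]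

/-- All three sets are cosets of the group of nonzero squares. -/
theorem exists_not_isSquare_iff (h : TwoSecantConfig a D B T 0 m) (hm : ∀ b ∈ B, m b = 0)
    (hT : T.Nonempty) :
    ∃ α β : F, α ≠ 0 ∧ β ≠ 0 ∧ (∀ s, s ∈ D ↔ ¬IsSquare (-(s * α / β))) ∧
      (∀ b, b ∈ B ↔ ¬IsSquare (-(β / b))) ∧
      ∀ u : F × F, u ∈ T ↔ u.2 = 0 ∧ ¬IsSquare (-(u.1 / α)) := by
  obtain ⟨R, hR⟩ := hT
  obtain ⟨d, hd⟩ := h.nonempty_slopes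
  have hx := h.fst_ne R hR
  have hd₀ : d ≠ 0 := ne_of_mem_of_not_mem hd (h.zero_notMem_slopes hm)
  obtain ⟨ν, hν⟩ : ∃ ν : F, ¬IsSquare ν := FiniteField.exists_nonsquare fun h2 => by
    have := FiniteField.even_card_of_char_two h2
    have := h.two_mul_card_slopes_add_one hm ⟨R, hR⟩
    omega
  have hν₀ : ν ≠ 0 := by
    rintro rfl
    exact hν .zero
  refine ⟨-(R.1 / ν), R.1 * d, neg_ne_zero.2 (div_ne_zero hx hν₀), mul_ne_zero hx hd₀, fun s => ?_,
    h.mem_ordinates_iff_not_isSquare hm hR hd, fun u => ?_⟩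
  · rw [show -(s * -(R.1 / ν) / (R.1 * d)) = ν⁻¹ * (s / d) by field_simp,
      not_isSquare_mul_iff (isSquare_inv.not.2 hν), h.mem_slopes_iff_isSquare_div hm ⟨R, hR⟩ hd]
    simp [hd₀]
  · rw [show -(u.1 / -(R.1 / ν)) = ν * (u.1 / R.1) by field_simp,
      not_isSquare_mul_iff hν, h.mem_iff_isSquare_fst_div hm hR]
    simp [hx]

end TwoSecantConfig

end Configuration

section Coordinates

variable {F : Type*} [Field F]

/-- A frame of `PG(2,F)`: homogeneous coordinates relative to the points spanned by the images of
the standard basis vectors of `F³`. -/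
abbrev PGFrame (F : Type*) [Field F] := (Fin 3 → F) ≃ₗ[F] (Fin 3 → F)

lemma pgMem_mk {v : Fin 3 → F} (hv : v ≠ 0) (L : PGLine F) :
    pgMem (Projectivization.mk F v hv) L ↔ v ∈ L.val := by
  rw [pgMem, Projectivization.submodule_mk, Submodule.span_singleton_le_iff_mem]

lemma exists_pgMem_not_pgMem {ℓ₁ ℓ₂ : PGLine F} (h : ℓ₁ ≠ ℓ₂) : ∃ P, pgMem P ℓ₁ ∧ ¬pgMem P ℓ₂ := by
  obtain ⟨v, hv₁, hv₂⟩ : ∃ v ∈ ℓ₁.val, v ∉ ℓ₂.val := by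
    by_contra! hle
    exact h (Subtype.ext (Submodule.eq_of_le_of_finrank_eq hle (ℓ₁.2.trans ℓ₂.2.symm)))
  have hv : v ≠ 0 := by
    rintro rfl
    exact hv₂ (zero_mem _)
  exact ⟨.mk F v hv, (pgMem_mk hv ℓ₁).2 hv₁, (pgMem_mk hv ℓ₂).not.2 hv₂⟩

lemma exists_pgMem_pgMem (ℓ₁ ℓ₂ : PGLine F) : ∃ P, pgMem P ℓ₁ ∧ pgMem P ℓ₂ := by
  have hdim := Submodule.finrank_sup_add_finrank_inf_eq ℓ₁.val ℓ₂.val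
  have hle := Submodule.finrank_le (ℓ₁.val ⊔ ℓ₂.val)
  rw [Module.finrank_fin_fun] at hle
  rw [ℓ₁.2, ℓ₂.2] at hdim
  have hne : ℓ₁.val ⊓ ℓ₂.val ≠ ⊥ := by
    intro h0
    rw [h0, finrank_bot] at hdim
    omega
  obtain ⟨v, ⟨hv₁, hv₂⟩, hv⟩ := Submodule.exists_mem_ne_zero_of_ne_bot hne
  exact ⟨.mk F v hv, (pgMem_mk hv ℓ₁).2 hv₁, (pgMem_mk hv ℓ₂).2 hv₂⟩

@[simp]
lemma intercept_zero_mk (s t : F) : intercept s (0, t) = t := by simp [intercept]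

namespace PGFrame

/-- The point with coordinate vector `v`. -/
def point (g : PGFrame F) (v : Fin 3 → F) (hv : v ≠ 0) : PGPoint F :=
  .mk F (g v) (g.map_ne_zero_iff.2 hv)

/-- The line with dual coordinate vector `c`. -/
def line (g : PGFrame F) (c : Fin 3 → F) (hc : c ≠ 0) : PGLine F :=
  ⟨LinearMap.ker (dotProductEquiv F (Fin 3) c ∘ₗ g.symm.toLinearMap), by
    have hne : dotProductEquiv F (Fin 3) c ∘ₗ g.symm.toLinearMap ≠ 0 := fun h0 =>
      (dotProductEquiv F (Fin 3)).map_ne_zero_iff.2 hc <| LinearMap.ext fun v => by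
        simpa using LinearMap.congr_fun h0 (g v)
    have := Module.Dual.finrank_ker_add_one_of_ne_zero hne
    rw [Module.finrank_fin_fun] at this
    omega⟩

variable (g : PGFrame F)

lemma pgMem_point_line {v c : Fin 3 → F} (hv : v ≠ 0) (hc : c ≠ 0) :
    pgMem (g.point v hv) (g.line c hc) ↔ c 0 * v 0 + c 1 * v 1 + c 2 * v 2 = 0 := by
  rw [point, pgMem_mk]
  simp [line, dotProduct, Fin.sum_univ_three]

lemma point_eq_iff {v w : Fin 3 → F} (hv : v ≠ 0) (hw : w ≠ 0) :
    g.point v hv = g.point w hw ↔ ∃ k : F, k • w = v := by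
  rw [point, point, Projectivization.mk_eq_mk_iff']
  simp only [← map_smul, g.injective.eq_iff]

lemma exists_point_eq (P : PGPoint F) : ∃ v hv, P = g.point v hv :=
  ⟨g.symm P.rep, g.symm.map_ne_zero_iff.2 P.rep_nonzero, by simp [point]⟩

lemma exists_line_eq (L : PGLine F) : ∃ c hc, L = g.line c hc := by
  have hlt : L.val < ⊤ := Submodule.lt_top_of_finrank_lt_finrank (by
    rw [L.2, Module.finrank_fin_fun]
    norm_num)
  obtain ⟨f, hf, hle⟩ := Submodule.exists_le_ker_of_lt_top L.val hlt
  have hf' : f ∘ₗ g.toLinearMap ≠ 0 := fun h0 => hf <| LinearMap.ext fun v => by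
    simpa using LinearMap.congr_fun h0 (g.symm v)
  refine ⟨(dotProductEquiv F (Fin 3)).symm (f ∘ₗ g.toLinearMap),
    (dotProductEquiv F (Fin 3)).symm.map_ne_zero_iff.2 hf', Subtype.ext ?_⟩
  refine Submodule.eq_of_le_of_finrank_eq (fun v hv => ?_) (by rw [L.2, (g.line _ _).2])
  simpa [line, LinearEquiv.apply_symm_apply] using hle hv

lemma line_eq_of_eq_smul {c c' : Fin 3 → F} (hc : c ≠ 0) (hc' : c' ≠ 0) {k : F} (hk : k ≠ 0)
    (h : c = k • c') : g.line c hc = g.line c' hc' := by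
  subst h
  exact Subtype.ext (Submodule.ext fun v => by simp [line, hk])

/-- The point at infinity of slope `d`. -/
def slopePt (d : F) : PGPoint F := g.point ![1, d, 0] (vec_ne_zero_of_coord_one _ 0 rfl)

/-- The point at infinity of the vertical lines. -/
def vertPt : PGPoint F := g.point ![0, 1, 0] (vec_ne_zero_of_coord_one _ 1 rfl)

/-- The affine point with coordinates `u`. -/
def affPt (u : F × F) : PGPoint F := g.point ![u.1, u.2, 1] (vec_ne_zero_of_coord_one _ 2 rfl)

/-- The line at infinity. -/
def infLine : PGLine F := g.line ![0, 0, 1] (vec_ne_zero_of_coord_one _ 2 rfl)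

/-- The vertical line of abscissa `t`. -/
def vertLine (t : F) : PGLine F := g.line ![1, 0, -t] (vec_ne_zero_of_coord_one _ 0 rfl)

/-- The affine line `y = s x + t`. -/
def slopeLine (s t : F) : PGLine F := g.line ![-s, 1, -t] (vec_ne_zero_of_coord_one _ 1 rfl)

lemma pgMem_slopePt_infLine (d : F) : pgMem (g.slopePt d) g.infLine := by
  simp [slopePt, infLine, pgMem_point_line]

lemma pgMem_vertPt_infLine : pgMem g.vertPt g.infLine := by
  simp [vertPt, infLine, pgMem_point_line]

lemma not_pgMem_affPt_infLine (u : F × F) : ¬pgMem (g.affPt u) g.infLine := by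
  simp [affPt, infLine, pgMem_point_line]

lemma not_pgMem_slopePt_vertLine (d t : F) : ¬pgMem (g.slopePt d) (g.vertLine t) := by
  simp [slopePt, vertLine, pgMem_point_line]

lemma pgMem_vertPt_vertLine (t : F) : pgMem g.vertPt (g.vertLine t) := by
  simp [vertPt, vertLine, pgMem_point_line]

lemma pgMem_affPt_vertLine (u : F × F) (t : F) : pgMem (g.affPt u) (g.vertLine t) ↔ u.1 = t := by
  simp [affPt, vertLine, pgMem_point_line, ← sub_eq_add_neg, sub_eq_zero]

lemma pgMem_slopePt_slopeLine (d s t : F) : pgMem (g.slopePt d) (g.slopeLine s t) ↔ d = s := by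
  simp [slopePt, slopeLine, pgMem_point_line, neg_add_eq_zero, eq_comm]

lemma not_pgMem_vertPt_slopeLine (s t : F) : ¬pgMem g.vertPt (g.slopeLine s t) := by
  simp [vertPt, slopeLine, pgMem_point_line]

lemma pgMem_affPt_slopeLine (u : F × F) (s t : F) :
    pgMem (g.affPt u) (g.slopeLine s t) ↔ intercept s u = t := by
  rw [affPt, slopeLine, pgMem_point_line, intercept, ← sub_eq_zero (b := t)]
  simp [neg_add_eq_sub, ← sub_eq_add_neg]

lemma vertLine_ne_slopeLine (r s t : F) : g.vertLine r ≠ g.slopeLine s t := fun h =>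
  g.not_pgMem_vertPt_slopeLine s t (h ▸ g.pgMem_vertPt_vertLine r)

lemma slopeLine_inj {s t s' t' : F} : g.slopeLine s t = g.slopeLine s' t' ↔ s = s' ∧ t = t' := by
  refine ⟨fun h => ?_, by rintro ⟨rfl, rfl⟩; rfl⟩
  have hs : s = s' := by rw [← g.pgMem_slopePt_slopeLine s s' t', ← h, pgMem_slopePt_slopeLine]
  have ht : intercept s' (0, t) = t' := by
    rw [← g.pgMem_affPt_slopeLine, ← h, pgMem_affPt_slopeLine, intercept_zero_mk]
  exact ⟨hs, by rwa [intercept_zero_mk] at ht⟩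

lemma slopePt_ne_affPt (d : F) (u : F × F) : g.slopePt d ≠ g.affPt u := fun h =>
  g.not_pgMem_affPt_infLine u (h ▸ g.pgMem_slopePt_infLine d)

lemma slopePt_injective : Function.Injective g.slopePt := fun d d' h => by
  rw [← g.pgMem_slopePt_slopeLine d d' 0, h, pgMem_slopePt_slopeLine]

lemma affPt_injective : Function.Injective g.affPt := fun u u' h => by
  have hfst : u.1 = u'.1 := by rw [← g.pgMem_affPt_vertLine, h, pgMem_affPt_vertLine]
  have hsnd : intercept 0 u = intercept 0 u' := by
    rw [← g.pgMem_affPt_slopeLine, h, pgMem_affPt_slopeLine]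
  exact Prod.ext hfst (by simpa [intercept] using hsnd)

lemma point_cases (P : PGPoint F) :
    (∃ d, P = g.slopePt d) ∨ P = g.vertPt ∨ ∃ u, P = g.affPt u := by
  obtain ⟨v, hv, rfl⟩ := g.exists_point_eq P
  by_cases h2 : v 2 = 0
  · by_cases h0 : v 0 = 0
    · refine Or.inr (Or.inl ((g.point_eq_iff _ _).2 ⟨v 1, ?_⟩))
      ext i
      fin_cases i <;> simp [h0, h2]
    · refine Or.inl ⟨v 1 / v 0, (g.point_eq_iff _ _).2 ⟨v 0, ?_⟩⟩
      ext i
      fin_cases i <;> simp [h2, mul_div_cancel₀, h0]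
  · refine Or.inr (Or.inr ⟨(v 0 / v 2, v 1 / v 2), (g.point_eq_iff _ _).2 ⟨v 2, ?_⟩⟩)
    ext i
    fin_cases i <;> simp [mul_div_cancel₀, h2]

lemma line_cases (L : PGLine F) :
    L = g.infLine ∨ (∃ t, L = g.vertLine t) ∨ ∃ s t, L = g.slopeLine s t := by
  obtain ⟨c, hc, rfl⟩ := g.exists_line_eq L
  by_cases h1 : c 1 = 0
  · by_cases h0 : c 0 = 0
    · have h2 : c 2 ≠ 0 := fun h2 => hc (by ext i; fin_cases i <;> simp [h0, h1, h2])
      refine Or.inl (g.line_eq_of_eq_smul _ _ h2 ?_)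
      ext i
      fin_cases i <;> simp [h0, h1]
    · refine Or.inr (Or.inl ⟨-(c 2 / c 0), g.line_eq_of_eq_smul _ _ h0 ?_⟩)
      ext i
      fin_cases i <;> simp [h1, mul_div_cancel₀, h0]
  · refine Or.inr (Or.inr ⟨-(c 0 / c 1), -(c 2 / c 1), g.line_eq_of_eq_smul _ _ h1 ?_⟩)
    ext i
    fin_cases i <;> simp [mul_div_cancel₀, h1]

lemma eq_infLine_of_pgMem {L : PGLine F} {d : F} (hd : pgMem (g.slopePt d) L)
    (hv : pgMem g.vertPt L) : L = g.infLine := by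
  rcases g.line_cases L with rfl | ⟨t, rfl⟩ | ⟨s, t, rfl⟩
  · rfl
  · exact absurd hd (g.not_pgMem_slopePt_vertLine d t)
  · exact absurd hv (g.not_pgMem_vertPt_slopeLine s t)

lemma eq_vertLine_of_pgMem {L : PGLine F} {u : F × F} (hu : pgMem (g.affPt u) L)
    (hv : pgMem g.vertPt L) : L = g.vertLine u.1 := by
  rcases g.line_cases L with rfl | ⟨t, rfl⟩ | ⟨s, t, rfl⟩
  · exact absurd hu (g.not_pgMem_affPt_infLine u)
  · rw [(g.pgMem_affPt_vertLine u t).1 hu]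
  · exact absurd hv (g.not_pgMem_vertPt_slopeLine s t)

end PGFrame

lemma linearIndependent_of_pgMem {ℓ₁ ℓ₂ : PGLine F} {P₁ X P₂ : PGPoint F} (hP₁ : pgMem P₁ ℓ₁)
    (hP₁' : ¬pgMem P₁ ℓ₂) (hX₁ : pgMem X ℓ₁) (hX₂ : pgMem X ℓ₂) (hP₂ : pgMem P₂ ℓ₂)
    (hP₂' : ¬pgMem P₂ ℓ₁) : LinearIndependent F ![P₁.rep, X.rep, P₂.rep] := by
  have mem_iff : ∀ P (L : PGLine F), pgMem P L ↔ P.rep ∈ L.val := fun P L => by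
    rw [← pgMem_mk P.rep_nonzero, P.mk_rep]
  rw [mem_iff] at hP₁ hP₁' hX₁ hX₂ hP₂ hP₂'
  rw [Fintype.linearIndependent_iff]
  intro c hc
  simp only [Fin.sum_univ_three, Matrix.cons_val] at hc
  have hc₀ : c 0 = 0 := by
    by_contra hc₀
    have hmem := add_mem (Submodule.smul_mem _ (c 1) hX₂) (Submodule.smul_mem _ (c 2) hP₂)
    rw [add_assoc, add_eq_zero_iff_eq_neg] at hc
    exact hP₁' ((Submodule.smul_mem_iff _ hc₀).1 (hc ▸ neg_mem hmem))
  have hc₂ : c 2 = 0 := by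
    by_contra hc₂
    have hmem := add_mem (Submodule.smul_mem _ (c 0) hP₁) (Submodule.smul_mem _ (c 1) hX₁)
    rw [add_comm, add_eq_zero_iff_eq_neg] at hc
    exact hP₂' ((Submodule.smul_mem_iff _ hc₂).1 (hc ▸ neg_mem hmem))
  have hc₁ : c 1 = 0 := by simpa [hc₀, hc₂, X.rep_nonzero] using hc
  intro i
  fin_cases i <;> assumption

lemma exists_frame_apply {v : Fin 3 → Fin 3 → F} (hv : LinearIndependent F v) :
    ∃ g : PGFrame F, ∀ x, g x = ∑ i, x i • v i :=
  ⟨(basisOfLinearIndependentOfCardEqFinrank hv (by simp)).equivFun.symm, fun x => by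
    simp [Module.Basis.equivFun_symm_apply]⟩

/-- The intersection of the two lines becomes the point at infinity of the vertical lines. -/
lemma exists_frame {ℓ₁ ℓ₂ : PGLine F} {P₁ P₂ : PGPoint F} (hP₁ : pgMem P₁ ℓ₁)
    (hP₁' : ¬pgMem P₁ ℓ₂) (hP₂ : pgMem P₂ ℓ₂) (hP₂' : ¬pgMem P₂ ℓ₁) :
    ∃ g : PGFrame F, ℓ₁ = g.infLine ∧ ℓ₂ = g.vertLine 0 ∧ P₁ = g.slopePt 0 ∧ P₂ = g.affPt 0 := by
  obtain ⟨X, hX₁, hX₂⟩ := exists_pgMem_pgMem ℓ₁ ℓ₂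
  obtain ⟨g, hg⟩ := exists_frame_apply (linearIndependent_of_pgMem hP₁ hP₁' hX₁ hX₂ hP₂ hP₂')
  have eq_point : ∀ (P : PGPoint F) v hv, g v = P.rep → P = g.point v hv := fun P v hv h => by
    rw [PGFrame.point, ← P.mk_rep]
    congr 1
    exact h.symm
  obtain rfl : P₁ = g.slopePt 0 := eq_point _ _ _ (by simp [hg, Fin.sum_univ_three])
  obtain rfl : X = g.vertPt := eq_point _ _ _ (by simp [hg, Fin.sum_univ_three])
  obtain rfl : P₂ = g.affPt 0 := eq_point _ _ _ (by simp [hg, Fin.sum_univ_three])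
  have hℓ₂ : ℓ₂ = g.vertLine (0 : F × F).1 := g.eq_vertLine_of_pgMem hP₂ hX₂
  rw [Prod.fst_zero] at hℓ₂
  exact ⟨g, g.eq_infLine_of_pgMem hP₁ hX₁, hℓ₂, rfl, rfl⟩

end Coordinates

section Semioval

variable {F : Type*} [Field F]

lemma nsec_eq_one_iff {S : Set (PGPoint F)} {P : PGPoint F} {L : PGLine F} (hP : P ∈ S)
    (hPL : pgMem P L) : nsec S L = 1 ↔ ∀ Q ∈ S, pgMem Q L → Q = P := by
  rw [nsec, Set.ncard_eq_one]
  simp only [Set.eq_singleton_iff_unique_mem]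
  constructor
  · rintro ⟨P', -, hP'⟩ Q hQ hQL
    exact (hP' Q ⟨hQ, hQL⟩).trans (hP' P ⟨hP, hPL⟩).symm
  · exact fun h => ⟨P, ⟨hP, hPL⟩, fun Q hQ => h Q hQ.1 hQ.2⟩

lemma nsec_le_nsec_diff_singleton_add_one [Finite F] (S : Set (PGPoint F)) (P : PGPoint F)
    (L : PGLine F) : nsec S L ≤ nsec (S \ {P}) L + 1 := by
  have hset : {Q ∈ S \ {P} | pgMem Q L} = {Q ∈ S | pgMem Q L} \ {P} := by
    ext Q
    simp only [Set.mem_sdiff, Set.mem_ofPred_eq]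
    tauto
  have := Set.pred_ncard_le_ncard_sdiff_singleton {Q ∈ S | pgMem Q L} P
  rw [nsec, nsec, hset]
  omega

lemma exists_tangent {S : Set (PGPoint F)} (hS : isSemioval S) {P : PGPoint F} (hP : P ∈ S) :
    ∃ t₀, pgMem P t₀ ∧ nsec S t₀ = 1 ∧
      ∀ t, pgMem P t → (t ≠ t₀ ↔ ∃ Q ∈ S, pgMem Q t ∧ Q ≠ P) := by
  obtain ⟨t₀, ⟨hPt₀, ht₀⟩, huniq⟩ := hS P hP
  refine ⟨t₀, hPt₀, ht₀, fun t hPt => ?_⟩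
  have hiff : t = t₀ ↔ nsec S t = 1 := ⟨fun h => h ▸ ht₀, fun h => huniq t ⟨hPt, h⟩⟩
  rw [Ne, hiff, nsec_eq_one_iff hP hPt]
  push Not
  rfl

namespace PGFrame

section Sets

variable [Finite F]

/-- The slopes of the points of `S` at infinity. -/
noncomputable def slopeSet (g : PGFrame F) (S : Set (PGPoint F)) : Finset F :=
  (Set.toFinite {d | g.slopePt d ∈ S}).toFinset

/-- The ordinates of the points of `S` with abscissa zero. -/
noncomputable def ordinateSet (g : PGFrame F) (S : Set (PGPoint F)) : Finset F :=
  (Set.toFinite {b | g.affPt (0, b) ∈ S}).toFinset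

/-- The affine points of `S` with nonzero abscissa. -/
noncomputable def offAxisSet (g : PGFrame F) (S : Set (PGPoint F)) : Finset (F × F) :=
  (Set.toFinite {u : F × F | u.1 ≠ 0 ∧ g.affPt u ∈ S}).toFinset

variable {g : PGFrame F} {S : Set (PGPoint F)}

@[simp]
lemma mem_slopeSet {d : F} : d ∈ g.slopeSet S ↔ g.slopePt d ∈ S := by simp [slopeSet]

@[simp]
lemma mem_ordinateSet {b : F} : b ∈ g.ordinateSet S ↔ g.affPt (0, b) ∈ S := by simp [ordinateSet]

@[simp]
lemma mem_offAxisSet {u : F × F} : u ∈ g.offAxisSet S ↔ u.1 ≠ 0 ∧ g.affPt u ∈ S := by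
  simp [offAxisSet]

lemma nsec_diff_vertPt_infLine : nsec (S \ {g.vertPt}) g.infLine = (g.slopeSet S).card := by
  rw [nsec, ← Set.ncard_coe_finset, ← Set.ncard_image_of_injective _ g.slopePt_injective]
  congr 1
  ext P
  simp only [Set.mem_ofPred_eq, Set.mem_sdiff, Set.mem_singleton_iff, Set.mem_image,
    Finset.mem_coe, mem_slopeSet]
  constructor
  · rintro ⟨⟨hP, hPX⟩, hPL⟩
    rcases g.point_cases P with ⟨d, rfl⟩ | rfl | ⟨u, rfl⟩
    · exact ⟨d, hP, rfl⟩
    · exact absurd rfl hPX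
    · exact absurd hPL (g.not_pgMem_affPt_infLine u)
  · rintro ⟨d, hd, rfl⟩
    refine ⟨⟨hd, fun h => ?_⟩, g.pgMem_slopePt_infLine d⟩
    exact g.not_pgMem_slopePt_vertLine d 0 (h ▸ g.pgMem_vertPt_vertLine 0)

lemma nsec_diff_vertPt_vertLine :
    nsec (S \ {g.vertPt}) (g.vertLine 0) = (g.ordinateSet S).card := by
  rw [nsec, ← Set.ncard_coe_finset,
    ← Set.ncard_image_of_injective _ (g.affPt_injective.comp (Prod.mk_right_injective (0 : F)))]
  congr 1
  ext P
  simp only [Set.mem_ofPred_eq, Set.mem_sdiff, Set.mem_singleton_iff, Set.mem_image,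
    Finset.mem_coe, mem_ordinateSet, Function.comp_apply]
  constructor
  · rintro ⟨⟨hP, hPX⟩, hPL⟩
    rcases g.point_cases P with ⟨d, rfl⟩ | rfl | ⟨⟨x, y⟩, rfl⟩
    · exact absurd hPL (g.not_pgMem_slopePt_vertLine d 0)
    · exact absurd rfl hPX
    · obtain rfl : x = 0 := (g.pgMem_affPt_vertLine _ _).1 hPL
      exact ⟨y, hP, rfl⟩
  · rintro ⟨b, hb, rfl⟩
    refine ⟨⟨hb, fun h => ?_⟩, (g.pgMem_affPt_vertLine _ _).2 rfl⟩
    exact g.not_pgMem_affPt_infLine _ (h ▸ g.pgMem_vertPt_infLine)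

lemma nsec_infLine_add_card_add_card (g : PGFrame F) (S : Set (PGPoint F)) :
    nsec S g.infLine + ((g.ordinateSet S).card + (g.offAxisSet S).card) = S.ncard := by
  have hdiff : S \ {P | pgMem P g.infLine} =
      (fun b => g.affPt (0, b)) '' g.ordinateSet S ∪ g.affPt '' g.offAxisSet S := by
    ext P
    simp only [Set.mem_sdiff, Set.mem_ofPred_eq, Set.mem_union, Set.mem_image, Finset.mem_coe,
      mem_ordinateSet, mem_offAxisSet]
    constructor
    · rintro ⟨hP, hPL⟩
      rcases g.point_cases P with ⟨d, rfl⟩ | rfl | ⟨⟨x, y⟩, rfl⟩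
      · exact absurd (g.pgMem_slopePt_infLine d) hPL
      · exact absurd g.pgMem_vertPt_infLine hPL
      · rcases eq_or_ne x 0 with rfl | hx
        · exact .inl ⟨y, hP, rfl⟩
        · exact .inr ⟨(x, y), ⟨hx, hP⟩, rfl⟩
    · rintro (⟨b, hb, rfl⟩ | ⟨u, ⟨-, hu⟩, rfl⟩)
      · exact ⟨hb, g.not_pgMem_affPt_infLine _⟩
      · exact ⟨hu, g.not_pgMem_affPt_infLine _⟩
  have hinj : Function.Injective fun b => g.affPt ((0 : F), b) :=
    g.affPt_injective.comp (Prod.mk_right_injective 0)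
  have hdisj : Disjoint ((fun b => g.affPt (0, b)) '' (g.ordinateSet S : Set F))
      (g.affPt '' (g.offAxisSet S : Set (F × F))) := by
    rw [Set.disjoint_left]
    rintro _ ⟨b, -, rfl⟩ ⟨u, hu, hub⟩
    rw [g.affPt_injective hub] at hu
    exact (mem_offAxisSet.1 hu).1 rfl
  rw [← Set.ncard_inter_add_ncard_sdiff_eq_ncard S {P | pgMem P g.infLine}, hdiff,
    Set.ncard_union_eq hdisj, Set.ncard_image_of_injective _ g.affPt_injective,
    Set.ncard_image_of_injective _ hinj, Set.ncard_coe_finset, Set.ncard_coe_finset]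
  rfl

lemma exists_mem_vertLine_iff (hX : g.vertPt ∉ S) {R : F × F} (hR : R.1 ≠ 0) :
    (∃ Q ∈ S, pgMem Q (g.vertLine R.1) ∧ Q ≠ g.affPt R) ↔
      ∃ u ∈ g.offAxisSet S, u ≠ R ∧ u.1 = R.1 := by
  simp only [mem_offAxisSet]
  constructor
  · rintro ⟨Q, hQ, hQL, hQR⟩
    rcases g.point_cases Q with ⟨d, rfl⟩ | rfl | ⟨u, rfl⟩
    · exact absurd hQL (g.not_pgMem_slopePt_vertLine d _)
    · exact absurd hQ hX
    · rw [pgMem_affPt_vertLine] at hQL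
      exact ⟨u, ⟨hQL ▸ hR, hQ⟩, fun h => hQR (h ▸ rfl), hQL⟩
  · rintro ⟨u, ⟨-, hu⟩, huR, hux⟩
    exact ⟨_, hu, (g.pgMem_affPt_vertLine _ _).2 hux, g.affPt_injective.ne huR⟩

lemma exists_mem_slopeLine_iff (hX : g.vertPt ∉ S) (s t : F) (P : PGPoint F) :
    (∃ Q ∈ S, pgMem Q (g.slopeLine s t) ∧ Q ≠ P) ↔
      (s ∈ g.slopeSet S ∧ g.slopePt s ≠ P) ∨ (t ∈ g.ordinateSet S ∧ g.affPt (0, t) ≠ P) ∨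
        ∃ u ∈ g.offAxisSet S, g.affPt u ≠ P ∧ intercept s u = t := by
  simp only [mem_slopeSet, mem_ordinateSet, mem_offAxisSet]
  constructor
  · rintro ⟨Q, hQ, hQL, hQP⟩
    rcases g.point_cases Q with ⟨d, rfl⟩ | rfl | ⟨⟨x, y⟩, rfl⟩
    · obtain rfl := (g.pgMem_slopePt_slopeLine _ _ _).1 hQL
      exact .inl ⟨hQ, hQP⟩
    · exact absurd hQ hX
    · obtain rfl := (g.pgMem_affPt_slopeLine _ _ _).1 hQL
      rcases eq_or_ne x 0 with rfl | hx
      · rw [intercept_zero_mk]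
        exact .inr (.inl ⟨hQ, hQP⟩)
      · exact .inr (.inr ⟨(x, y), ⟨hx, hQ⟩, hQP, rfl⟩)
  · rintro (⟨hs, hP⟩ | ⟨ht, hP⟩ | ⟨u, ⟨-, hu⟩, hP, hut⟩)
    · exact ⟨_, hs, (g.pgMem_slopePt_slopeLine _ _ _).2 rfl, hP⟩
    · exact ⟨_, ht, (g.pgMem_affPt_slopeLine _ _ _).2 (by simp), hP⟩
    · exact ⟨_, hu, (g.pgMem_affPt_slopeLine _ _ _).2 hut, hP⟩

end Sets

section Tangents

variable [Finite F] {g : PGFrame F} {S : Set (PGPoint F)}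

lemma exists_tangent_slopePt (hS : isSemioval S) (hX : g.vertPt ∉ S) (h₁ : nsec S g.infLine ≠ 1)
    {d : F} (hd : d ∈ g.slopeSet S) :
    ∃ t₀, nsec S (g.slopeLine d t₀) = 1 ∧
      ∀ t, t ≠ t₀ → t ∈ g.ordinateSet S ∨ ∃ u ∈ g.offAxisSet S, intercept d u = t := by
  obtain ⟨L, hdL, hL, htan⟩ := exists_tangent hS (mem_slopeSet.1 hd)
  rcases g.line_cases L with rfl | ⟨r, rfl⟩ | ⟨s, t₀, rfl⟩
  · exact absurd hL h₁
  · exact absurd hdL (g.not_pgMem_slopePt_vertLine d r)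
  · obtain rfl := (g.pgMem_slopePt_slopeLine _ _ _).1 hdL
    refine ⟨t₀, hL, fun t ht => ?_⟩
    have hmem := htan (g.slopeLine d t) ((g.pgMem_slopePt_slopeLine _ _ _).2 rfl)
    rw [exists_mem_slopeLine_iff hX, Ne, slopeLine_inj] at hmem
    rcases hmem.1 (by simp [ht]) with ⟨-, hne⟩ | ⟨htB, -⟩ | ⟨u, hu, -, hut⟩
    · exact absurd rfl hne
    · exact .inl htB
    · exact .inr ⟨u, hu, hut⟩

lemma exists_tangent_axis (hS : isSemioval S) (hX : g.vertPt ∉ S)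
    (h₂ : nsec S (g.vertLine 0) ≠ 1) {b : F} (hb : b ∈ g.ordinateSet S) :
    ∃ s₀, nsec S (g.slopeLine s₀ b) = 1 ∧
      ∀ s, s ≠ s₀ → s ∈ g.slopeSet S ∨ ∃ u ∈ g.offAxisSet S, intercept s u = b := by
  obtain ⟨L, hbL, hL, htan⟩ := exists_tangent hS (mem_ordinateSet.1 hb)
  rcases g.line_cases L with rfl | ⟨r, rfl⟩ | ⟨s₀, t, rfl⟩
  · exact absurd hbL (g.not_pgMem_affPt_infLine _)
  · obtain rfl : 0 = r := (g.pgMem_affPt_vertLine _ _).1 hbL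
    exact absurd hL h₂
  · obtain rfl : b = t := by simpa using (g.pgMem_affPt_slopeLine _ _ _).1 hbL
    refine ⟨s₀, hL, fun s hs => ?_⟩
    have hmem := htan (g.slopeLine s b) ((g.pgMem_affPt_slopeLine _ _ _).2 (by simp))
    rw [exists_mem_slopeLine_iff hX, Ne, slopeLine_inj] at hmem
    rcases hmem.1 (by simp [hs]) with ⟨hsD, -⟩ | ⟨-, hne⟩ | ⟨u, hu, -, hub⟩
    · exact .inl hsD
    · exact absurd rfl hne
    · exact .inr ⟨u, hu, hub⟩

lemma vertical_or_exists_tangent_slope (hS : isSemioval S) (hX : g.vertPt ∉ S) {R : F × F}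
    (hR : R ∈ g.offAxisSet S) :
    ((∀ u ∈ g.offAxisSet S, u.1 = R.1 → u = R) ∧
        ∀ s, Joins (g.slopeSet S) (g.ordinateSet S) (g.offAxisSet S) R s) ∨
      ∃ s₀, (∃ u ∈ g.offAxisSet S, u ≠ R ∧ u.1 = R.1) ∧
        ∀ s, Joins (g.slopeSet S) (g.ordinateSet S) (g.offAxisSet S) R s ↔ s ≠ s₀ := by
  obtain ⟨hR₀, hRS⟩ := mem_offAxisSet.1 hR
  obtain ⟨L, hRL, hL, htan⟩ := exists_tangent hS hRS
  have hvert := (htan (g.vertLine R.1) ((g.pgMem_affPt_vertLine _ _).2 rfl)).trans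
    (exists_mem_vertLine_iff hX hR₀)
  have hjoins : ∀ s, g.slopeLine s (intercept s R) ≠ L ↔
      Joins (g.slopeSet S) (g.ordinateSet S) (g.offAxisSet S) R s := fun s => by
    have hne : ∀ t, ((0 : F), t) ≠ R := fun t h => hR₀ (h ▸ rfl)
    rw [htan _ ((g.pgMem_affPt_slopeLine _ _ _).2 rfl), exists_mem_slopeLine_iff hX, Joins]
    simp only [ne_eq, slopePt_ne_affPt, g.affPt_injective.eq_iff, hne, not_false_eq_true, and_true]
  rcases g.line_cases L with rfl | ⟨r, rfl⟩ | ⟨s₀, t, rfl⟩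
  · exact absurd hRL (g.not_pgMem_affPt_infLine R)
  · obtain rfl := (g.pgMem_affPt_vertLine _ _).1 hRL
    refine .inl ⟨fun u hu hux => ?_, fun s => (hjoins s).1 (g.vertLine_ne_slopeLine _ _ _).symm⟩
    by_contra huR
    exact hvert.2 ⟨u, hu, huR, hux⟩ rfl
  · obtain rfl := (g.pgMem_affPt_slopeLine _ _ _).1 hRL
    refine .inr ⟨s₀, hvert.1 (g.vertLine_ne_slopeLine _ _ _), fun s => ?_⟩
    rw [← hjoins, Ne, slopeLine_inj, not_iff_not, and_iff_left_iff_imp]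
    rintro rfl
    rfl

end Tangents

end PGFrame

end Semioval

section TwoSecants

variable {F : Type*} [Field F]

/-- `N` is the nucleus of the line `ℓ`: it lies on all tangents to `S` at points of `ℓ`. -/
def IsNucleus (S : Set (PGPoint F)) (ℓ : PGLine F) (N : PGPoint F) : Prop :=
  ∀ P ∈ S, pgMem P ℓ → ∀ t : PGLine F, pgMem P t → nsec S t = 1 → pgMem N t

/-- A semioval of size `q - 1 + a` with two `a`-secants and their nuclei, where `2 < a`. -/
structure TwoSecantSemioval [Fintype F] (a : ℕ) (S : Set (PGPoint F)) (ℓ₁ ℓ₂ : PGLine F)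
    (N₁ N₂ : PGPoint F) : Prop where
  two_lt : 2 < a
  isSemioval : isSemioval S
  ncard_eq : S.ncard = Fintype.card F - 1 + a
  nsec_left : nsec S ℓ₁ = a
  nsec_right : nsec S ℓ₂ = a
  nucleus_left : IsNucleus S ℓ₁ N₁
  nucleus_right : IsNucleus S ℓ₂ N₂

lemma mem_iff_ne_of_card_add_one_eq {α : Type*} [Fintype α] {A : Finset α} {x₀ : α}
    (hA : A.card + 1 = Fintype.card α) (hx₀ : x₀ ∉ A) (x : α) : x ∈ A ↔ x ≠ x₀ := by
  classical
  have hcompl : Aᶜ.card = 1 := by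
    rw [Finset.card_compl, ← hA, Nat.add_sub_cancel_left]
  obtain ⟨y, hy⟩ := Finset.card_eq_one.1 hcompl
  obtain rfl : x₀ = y := by rwa [← Finset.mem_singleton, ← hy, Finset.mem_compl]
  rw [← not_iff_not, ← Finset.mem_compl, hy, Finset.mem_singleton, not_not]

namespace TwoSecantSemioval

variable [Fintype F] {a : ℕ} {S : Set (PGPoint F)} {g : PGFrame F} {N₁ N₂ : PGPoint F}

open PGFrame

lemma card_ordinateSet_add_card_offAxisSet
    (h : TwoSecantSemioval a S g.infLine (g.vertLine 0) N₁ N₂) :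
    (g.ordinateSet S).card + (g.offAxisSet S).card + 1 = Fintype.card F := by
  have hq : 1 < Fintype.card F := Fintype.one_lt_card
  have hsplit := g.nsec_infLine_add_card_add_card S
  rw [h.nsec_left, h.ncard_eq] at hsplit
  omega

lemma vertPt_notMem (h : TwoSecantSemioval a S g.infLine (g.vertLine 0) N₁ N₂) :
    g.vertPt ∉ S := by
  classical
  intro hX
  have ha := h.two_lt
  obtain ⟨L, hXL, hL, htan⟩ := exists_tangent h.isSemioval hX
  rcases g.line_cases L with rfl | ⟨r, rfl⟩ | ⟨s, t, rfl⟩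
  · have := h.nsec_left
    omega
  · have hr : (0 : F) ≠ r := by
      rintro rfl
      have := h.nsec_right
      omega
    -- Every vertical line other than the axis and the tangent contains a point off the axis.
    have hsub : Finset.univ \ {0, r} ⊆ (g.offAxisSet S).image Prod.fst := by
      intro x hx
      simp only [Finset.mem_sdiff, Finset.mem_univ, true_and, Finset.mem_insert,
        Finset.mem_singleton, not_or] at hx
      have hne : g.vertLine x ≠ g.vertLine r := fun hxr => hx.2 <|
        (g.pgMem_affPt_vertLine (x, 0) r).1 (hxr ▸ (g.pgMem_affPt_vertLine (x, 0) x).2 rfl)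
      obtain ⟨Q, hQ, hQL, hQX⟩ := (htan _ (g.pgMem_vertPt_vertLine x)).1 hne
      rcases g.point_cases Q with ⟨d, rfl⟩ | rfl | ⟨u, rfl⟩
      · exact absurd hQL (g.not_pgMem_slopePt_vertLine d x)
      · exact absurd rfl hQX
      · obtain rfl := (g.pgMem_affPt_vertLine _ _).1 hQL
        exact Finset.mem_image_of_mem _ (mem_offAxisSet.2 ⟨hx.1, hQ⟩)
    have hle := (Finset.card_le_card hsub).trans Finset.card_image_le
    rw [Finset.card_sdiff_of_subset (Finset.subset_univ _), Finset.card_univ,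
      Finset.card_pair hr] at hle
    have hB := nsec_le_nsec_diff_singleton_add_one S g.vertPt (g.vertLine 0)
    rw [h.nsec_right, nsec_diff_vertPt_vertLine] at hB
    have := h.card_ordinateSet_add_card_offAxisSet
    omega
  · exact g.not_pgMem_vertPt_slopeLine s t hXL

lemma card_slopeSet (h : TwoSecantSemioval a S g.infLine (g.vertLine 0) N₁ N₂) :
    (g.slopeSet S).card = a := by
  rw [← nsec_diff_vertPt_infLine, Set.sdiff_singleton_eq_self h.vertPt_notMem, h.nsec_left]

lemma card_ordinateSet (h : TwoSecantSemioval a S g.infLine (g.vertLine 0) N₁ N₂) :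
    (g.ordinateSet S).card = a := by
  rw [← nsec_diff_vertPt_vertLine, Set.sdiff_singleton_eq_self h.vertPt_notMem, h.nsec_right]

lemma exists_nucleus_left_eq (h : TwoSecantSemioval a S g.infLine (g.vertLine 0) N₁ N₂) :
    ∃ n, N₁ = g.affPt n ∧ ∀ d ∈ g.slopeSet S, ∀ t, t ≠ intercept d n →
      t ∈ g.ordinateSet S ∨ ∃ u ∈ g.offAxisSet S, intercept d u = t := by
  have ha := h.two_lt
  have htan : ∀ d ∈ g.slopeSet S, ∃ t₀, pgMem N₁ (g.slopeLine d t₀) ∧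
      ∀ t, t ≠ t₀ → t ∈ g.ordinateSet S ∨ ∃ u ∈ g.offAxisSet S, intercept d u = t := by
    intro d hd
    obtain ⟨t₀, ht₀, hcover⟩ := exists_tangent_slopePt h.isSemioval h.vertPt_notMem
      (by rw [h.nsec_left]; omega) hd
    exact ⟨t₀, h.nucleus_left _ (mem_slopeSet.1 hd) (g.pgMem_slopePt_infLine d) _
      ((g.pgMem_slopePt_slopeLine _ _ _).2 rfl) ht₀, hcover⟩
  obtain ⟨d, hd, d', hd', hdd'⟩ := Finset.one_lt_card.1
    (by rw [h.card_slopeSet]; omega : 1 < (g.slopeSet S).card)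
  obtain ⟨t, ht, -⟩ := htan d hd
  obtain ⟨t', ht', -⟩ := htan d' hd'
  rcases g.point_cases N₁ with ⟨e, rfl⟩ | rfl | ⟨n, rfl⟩
  · rw [pgMem_slopePt_slopeLine] at ht ht'
    exact absurd (ht.symm.trans ht') hdd'
  · exact absurd ht (g.not_pgMem_vertPt_slopeLine _ _)
  · refine ⟨n, rfl, fun d hd => ?_⟩
    obtain ⟨t₀, hn, hcover⟩ := htan d hd
    rwa [(g.pgMem_affPt_slopeLine _ _ _).1 hn]

lemma exists_tangent_slope (h : TwoSecantSemioval a S g.infLine (g.vertLine 0) N₁ N₂) {b : F}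
    (hb : b ∈ g.ordinateSet S) : ∃ s₀, pgMem N₂ (g.slopeLine s₀ b) ∧
      ∀ s, s ≠ s₀ → s ∈ g.slopeSet S ∨ ∃ u ∈ g.offAxisSet S, intercept s u = b := by
  have ha := h.two_lt
  obtain ⟨s₀, hs₀, hcover⟩ := exists_tangent_axis h.isSemioval h.vertPt_notMem
    (by rw [h.nsec_right]; omega) hb
  exact ⟨s₀, h.nucleus_right _ (mem_ordinateSet.1 hb) ((g.pgMem_affPt_vertLine _ _).2 rfl) _
    ((g.pgMem_affPt_slopeLine _ _ _).2 (by simp)) hs₀, hcover⟩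

theorem exists_twoSecantConfig (h : TwoSecantSemioval a S g.infLine (g.vertLine 0) N₁ N₂) :
    ∃ n m, N₁ = g.affPt n ∧
      TwoSecantConfig a (g.slopeSet S) (g.ordinateSet S) (g.offAxisSet S) n m ∧
      ∀ b ∈ g.ordinateSet S, pgMem N₂ (g.slopeLine (m b) b) := by
  obtain ⟨n, hn, hcoverD⟩ := h.exists_nucleus_left_eq
  choose! m hm hcoverB using fun b (hb : b ∈ g.ordinateSet S) => h.exists_tangent_slope hb
  refine ⟨n, m, hn, ?_, hm⟩
  exact
    { two_lt := h.two_lt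
      cardD := h.card_slopeSet
      cardB := h.card_ordinateSet
      cardT := by
        rw [← h.card_ordinateSet_add_card_offAxisSet, h.card_ordinateSet, Nat.add_comm a]
      fst_ne := fun u hu => (mem_offAxisSet.1 hu).1
      tanD := hcoverD
      tanB := hcoverB
      tanT := fun R hR => vertical_or_exists_tangent_slope h.isSemioval h.vertPt_notMem hR }

lemma exists_nuclei_eq (h : TwoSecantSemioval a S g.infLine (g.vertLine 0) N₁ N₂) :
    ∃ t d, N₁ = g.affPt (0, t) ∧ N₂ = g.slopePt d := by
  obtain ⟨⟨x, t⟩, m, rfl, hconf, hm⟩ := h.exists_twoSecantConfig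
  obtain rfl : x = 0 := hconf.nucleus_fst_eq_zero
  have ha := h.two_lt
  obtain ⟨b, hb, b', hb', hbb'⟩ := Finset.one_lt_card.1
    (by rw [h.card_ordinateSet]; omega : 1 < (g.ordinateSet S).card)
  have hN := hm b hb
  have hN' := hm b' hb'
  rw [hconf.tangent_slope_eq hb' hb] at hN'
  rcases g.point_cases N₂ with ⟨d, rfl⟩ | rfl | ⟨u, rfl⟩
  · exact ⟨t, d, rfl, rfl⟩
  · exact absurd hN (g.not_pgMem_vertPt_slopeLine _ _)
  · rw [pgMem_affPt_slopeLine] at hN hN'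
    exact absurd (hN.symm.trans hN') hbb'

theorem pgMem_nuclei {ℓ₁ ℓ₂ : PGLine F} (h : TwoSecantSemioval a S ℓ₁ ℓ₂ N₁ N₂) (hne : ℓ₁ ≠ ℓ₂) :
    (pgMem N₁ ℓ₂ ∧ ¬pgMem N₁ ℓ₁) ∧ pgMem N₂ ℓ₁ ∧ ¬pgMem N₂ ℓ₂ := by
  obtain ⟨P₁, hP₁, hP₁'⟩ := exists_pgMem_not_pgMem hne
  obtain ⟨P₂, hP₂, hP₂'⟩ := exists_pgMem_not_pgMem hne.symm
  obtain ⟨g, rfl, rfl, -, -⟩ := exists_frame hP₁ hP₁' hP₂ hP₂'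
  obtain ⟨t, d, rfl, rfl⟩ := h.exists_nuclei_eq
  exact ⟨⟨(g.pgMem_affPt_vertLine _ _).2 rfl, g.not_pgMem_affPt_infLine _⟩,
    g.pgMem_slopePt_infLine d, g.not_pgMem_slopePt_vertLine d 0⟩

/-- In a frame adapted to the nuclei, the tangents at points of the second line are horizontal. -/
lemma exists_twoSecantConfig_zero
    (h : TwoSecantSemioval a S g.infLine (g.vertLine 0) (g.affPt 0) (g.slopePt 0)) :
    ∃ m, TwoSecantConfig a (g.slopeSet S) (g.ordinateSet S) (g.offAxisSet S) 0 m ∧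
      ∀ b ∈ g.ordinateSet S, m b = 0 := by
  obtain ⟨n, m, hn, hconf, hm⟩ := h.exists_twoSecantConfig
  obtain rfl := g.affPt_injective hn
  exact ⟨m, hconf, fun b hb => ((g.pgMem_slopePt_slopeLine _ _ _).1 (hm b hb)).symm⟩

end TwoSecantSemioval

section Conclusion

variable [Finite F] {g : PGFrame F} {S : Set (PGPoint F)}

open PGFrame

lemma pgMem_tangent_of_snd_eq_zero (hS : isSemioval S) (hX : g.vertPt ∉ S)
    (hsnd : ∀ u ∈ g.offAxisSet S, u.2 = 0) {P R : PGPoint F} (hP₁ : pgMem P g.infLine)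
    (hP₂ : pgMem P (g.vertLine 0)) (hR : R ∈ S) (hR₁ : ¬pgMem R g.infLine)
    (hR₂ : ¬pgMem R (g.vertLine 0)) {t : PGLine F} (hRt : pgMem R t) (ht : nsec S t = 1) :
    pgMem P t := by
  obtain rfl : P = g.vertPt := by
    rcases g.point_cases P with ⟨d, rfl⟩ | rfl | ⟨u, rfl⟩
    · exact absurd hP₂ (g.not_pgMem_slopePt_vertLine d 0)
    · rfl
    · exact absurd hP₁ (g.not_pgMem_affPt_infLine u)
  rcases g.point_cases R with ⟨d, rfl⟩ | rfl | ⟨u, rfl⟩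
  · exact absurd (g.pgMem_slopePt_infLine d) hR₁
  · exact absurd hR hX
  · rw [pgMem_affPt_vertLine] at hR₂
    have huL := (g.pgMem_affPt_vertLine u u.1).2 rfl
    have hvert : nsec S (g.vertLine u.1) = 1 := by
      refine (nsec_eq_one_iff hR huL).2 fun Q hQ hQL => ?_
      by_contra hQR
      obtain ⟨v, hv, hvu, hvx⟩ := (exists_mem_vertLine_iff hX hR₂).1 ⟨Q, hQ, hQL, hQR⟩
      exact hvu (Prod.ext hvx ((hsnd v hv).trans (hsnd u (mem_offAxisSet.2 ⟨hR₂, hR⟩)).symm))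
    rw [(hS _ hR).unique ⟨hRt, ht⟩ ⟨huL, hvert⟩]
    exact g.pgMem_vertPt_vertLine _

lemma isSymmDiff_of_offAxisSet_eq_empty (hX : g.vertPt ∉ S) (hD : ∀ s, s ∈ g.slopeSet S ↔ s ≠ 0)
    (hB : ∀ b, b ∈ g.ordinateSet S ↔ b ≠ 0) (hT : g.offAxisSet S = ∅) :
    isSymmDiffOfTwoLinesMinusTwoPoints S g.infLine (g.vertLine 0) := by
  refine ⟨fun h => g.not_pgMem_slopePt_vertLine 0 0 (h ▸ g.pgMem_slopePt_infLine 0),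
    g.slopePt 0, g.affPt (0, 0), g.pgMem_slopePt_infLine 0, g.not_pgMem_slopePt_vertLine 0 0,
    (g.pgMem_affPt_vertLine _ _).2 rfl, g.not_pgMem_affPt_infLine _, Set.ext fun P => ?_⟩
  simp only [Set.mem_sdiff, Set.mem_union, Set.mem_ofPred_eq, Set.mem_insert_iff,
    Set.mem_singleton_iff, not_or]
  rcases g.point_cases P with ⟨d, rfl⟩ | rfl | ⟨⟨x, y⟩, rfl⟩
  · simp [← mem_slopeSet, hD, pgMem_slopePt_infLine, not_pgMem_slopePt_vertLine,
      slopePt_ne_affPt, g.slopePt_injective.eq_iff]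
  · simp [hX, pgMem_vertPt_infLine, pgMem_vertPt_vertLine]
  · rcases eq_or_ne x 0 with rfl | hx
    · simp [← mem_ordinateSet, hB, not_pgMem_affPt_infLine, pgMem_affPt_vertLine,
        (g.slopePt_ne_affPt _ _).symm, g.affPt_injective.eq_iff]
    · have hxS : g.affPt (x, y) ∉ S := fun h =>
        Finset.notMem_empty _ (hT ▸ mem_offAxisSet.2 ⟨hx, h⟩)
      simp [hxS, hx, not_pgMem_affPt_infLine, pgMem_affPt_vertLine]

end Conclusion

section Blokhuis

variable {g : PGFrame F}

namespace PGFrame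

lemma exists_rescale (g : PGFrame F) {α β : F} (hα : α ≠ 0) (hβ : β ≠ 0) : ∃ g' : PGFrame F,
    (∀ d, g'.slopePt d = g.slopePt (β * d / α)) ∧
      ∀ u, g'.affPt u = g.affPt (α * u.1, β * u.2) := by
  have hne : ∀ i, (![α, β, 1] : Fin 3 → F) i ≠ 0 := by
    intro i
    fin_cases i <;> simp [hα, hβ]
  let e : PGFrame F :=
    LinearEquiv.piCongrRight fun i => LinearEquiv.smulOfNeZero F F (![α, β, 1] i) (hne i)
  have he : ∀ v hv, PGFrame.point (e.trans g) v hv = g.point (e v) (e.map_ne_zero_iff.2 hv) :=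
    fun v hv => rfl
  refine ⟨e.trans g, fun d => ?_, fun u => ?_⟩
  · rw [slopePt, slopePt, he, point_eq_iff]
    refine ⟨α, funext fun i => ?_⟩
    fin_cases i <;> simp [e, mul_div_cancel₀, hα]
  · rw [affPt, affPt, he, point_eq_iff]
    refine ⟨1, funext fun i => ?_⟩
    fin_cases i <;> simp [e]

lemma map_image_blokhuisSemioval (g : PGFrame F) :
    Projectivization.map (σ := RingHom.id F) g.toLinearMap g.injective '' blokhuisSemioval F =
      {P | ∃ s : F, ¬IsSquare (-s) ∧
        (P = g.affPt (0, s⁻¹) ∨ P = g.affPt (s, 0) ∨ P = g.slopePt s)} := by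
  have hinv : ∀ s : F, ¬IsSquare (-s) →
      g.point ![0, 1, s] (vec_ne_zero_of_coord_one _ 1 rfl) = g.affPt (0, s⁻¹) := by
    intro s hs
    have hs₀ : s ≠ 0 := by
      rintro rfl
      simp at hs
    refine (g.point_eq_iff _ _).2 ⟨s, funext fun i => ?_⟩
    fin_cases i <;> simp [hs₀]
  ext P
  constructor
  · rintro ⟨_, ⟨s, hs, rfl | rfl | rfl⟩, rfl⟩
    · exact ⟨s, hs, .inl (hinv s hs)⟩
    · exact ⟨s, hs, .inr (.inl rfl)⟩
    · exact ⟨s, hs, .inr (.inr rfl)⟩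
  · rintro ⟨s, hs, rfl | rfl | rfl⟩
    · exact ⟨_, ⟨s, hs, .inl rfl⟩, hinv s hs⟩
    · exact ⟨_, ⟨s, hs, .inr (.inl rfl)⟩, rfl⟩
    · exact ⟨_, ⟨s, hs, .inr (.inr rfl)⟩, rfl⟩

end PGFrame

open PGFrame

lemma projEquivalent_blokhuisSemioval [Finite F] {S : Set (PGPoint F)} (hX : g.vertPt ∉ S)
    {α β : F} (hα : α ≠ 0) (hβ : β ≠ 0) (hD : ∀ s, s ∈ g.slopeSet S ↔ ¬IsSquare (-(s * α / β)))
    (hB : ∀ b, b ∈ g.ordinateSet S ↔ ¬IsSquare (-(β / b)))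
    (hT : ∀ u : F × F, u ∈ g.offAxisSet S ↔ u.2 = 0 ∧ ¬IsSquare (-(u.1 / α))) :
    projEquivalent (blokhuisSemioval F) S := by
  obtain ⟨g', hslope, haff⟩ := g.exists_rescale hα hβ
  refine ⟨g', (g'.map_image_blokhuisSemioval).trans (Set.ext fun P => ?_)⟩
  simp only [Set.mem_ofPred_eq, hslope, haff, mul_zero]
  constructor
  · rintro ⟨s, hs, rfl | rfl | rfl⟩
    · rw [← mem_ordinateSet, hB]
      rwa [← div_eq_mul_inv, div_div_cancel₀ hβ]
    · refine (mem_offAxisSet.1 ((hT _).2 ⟨rfl, ?_⟩)).2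
      rwa [mul_div_cancel_left₀ _ hα]
    · rw [← mem_slopeSet, hD]
      rwa [div_mul_cancel₀ _ hα, mul_div_cancel_left₀ _ hβ]
  · intro hP
    rcases g.point_cases P with ⟨d, rfl⟩ | rfl | ⟨⟨x, y⟩, rfl⟩
    · refine ⟨d * α / β, (hD d).1 (mem_slopeSet.2 hP), .inr (.inr ?_)⟩
      rw [mul_div_cancel₀ _ hβ, mul_div_cancel_right₀ _ hα]
    · exact absurd hP hX
    · rcases eq_or_ne x 0 with rfl | hx
      · refine ⟨β / y, (hB y).1 (mem_ordinateSet.2 hP), .inl ?_⟩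
        rw [inv_div, mul_div_cancel₀ _ hβ]
      · obtain ⟨rfl, hsq⟩ := (hT (x, y)).1 (mem_offAxisSet.2 ⟨hx, hP⟩)
        refine ⟨x / α, hsq, .inr (.inl ?_)⟩
        rw [mul_div_cancel₀ _ hα]

end Blokhuis

namespace TwoSecantSemioval

variable [Fintype F] {a : ℕ} {S : Set (PGPoint F)} {g : PGFrame F}

theorem isSymmDiff_or_projEquivalent
    (h : TwoSecantSemioval a S g.infLine (g.vertLine 0) (g.affPt 0) (g.slopePt 0)) :
    isSymmDiffOfTwoLinesMinusTwoPoints S g.infLine (g.vertLine 0) ∨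
      projEquivalent (blokhuisSemioval F) S := by
  obtain ⟨m, hconf, hm⟩ := h.exists_twoSecantConfig_zero
  rcases (g.offAxisSet S).eq_empty_or_nonempty with hT | hT
  · have hcard : a + 1 = Fintype.card F := by
      rw [← hconf.cardT, hT, Finset.card_empty, zero_add]
    exact .inl <| isSymmDiff_of_offAxisSet_eq_empty h.vertPt_notMem
      (mem_iff_ne_of_card_add_one_eq (by rwa [hconf.cardD]) (hconf.zero_notMem_slopes hm))
      (mem_iff_ne_of_card_add_one_eq (by rwa [hconf.cardB]) hconf.zero_notMem_ordinates) hT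
  · obtain ⟨α, β, hα, hβ, hD, hB, hT⟩ := hconf.exists_not_isSquare_iff hm hT
    exact .inr (projEquivalent_blokhuisSemioval h.vertPt_notMem hα hβ hD hB hT)

end TwoSecantSemioval

end TwoSecants

/-- The third alternative of `stmt_8` does not occur. -/
theorem stmt_8_general {F : Type*} [Field F] [Fintype F] {a : ℕ} (ha : 2 < a)
    {S : Set (PGPoint F)} (hS : isSemioval S) (hsize : S.ncard = Fintype.card F - 1 + a)
    {ℓ₁ ℓ₂ : PGLine F} (hne : ℓ₁ ≠ ℓ₂) (h₁ : nsec S ℓ₁ = a) (h₂ : nsec S ℓ₂ = a)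
    {N₁ N₂ : PGPoint F} (hN₁ : IsNucleus S ℓ₁ N₁) (hN₂ : IsNucleus S ℓ₂ N₂) :
    pgMem N₁ ℓ₂ ∧ pgMem N₂ ℓ₁ ∧
    (∀ X : PGPoint F, pgMem X ℓ₁ → pgMem X ℓ₂ →
      ∀ R ∈ S, ¬pgMem R ℓ₁ → ¬pgMem R ℓ₂ → ∀ t, pgMem R t → nsec S t = 1 → pgMem X t) ∧
    (isSymmDiffOfTwoLinesMinusTwoPoints S ℓ₁ ℓ₂ ∨ projEquivalent (blokhuisSemioval F) S) := by
  have h : TwoSecantSemioval a S ℓ₁ ℓ₂ N₁ N₂ := ⟨ha, hS, hsize, h₁, h₂, hN₁, hN₂⟩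
  obtain ⟨⟨hN₁ℓ₂, hN₁ℓ₁⟩, hN₂ℓ₁, hN₂ℓ₂⟩ := h.pgMem_nuclei hne
  obtain ⟨g, rfl, rfl, rfl, rfl⟩ := exists_frame hN₂ℓ₁ hN₂ℓ₂ hN₁ℓ₂ hN₁ℓ₁
  obtain ⟨m, hconf, hm⟩ := h.exists_twoSecantConfig_zero
  exact ⟨hN₁ℓ₂, hN₂ℓ₁, fun X hX₁ hX₂ R hR hR₁ hR₂ t => pgMem_tangent_of_snd_eq_zero hS
    h.vertPt_notMem (fun u hu => hconf.snd_eq_zero hm hu) hX₁ hX₂ hR hR₁ hR₂,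
    h.isSymmDiff_or_projEquivalent⟩

/-- Let `S` be a semioval of size `q − 1 + a`, `a > 2`, in `PG(2,q)`, `q = p^h`, with two
`a`-secants `ℓ₁, ℓ₂` with nuclei `N₁, N₂`, and let `S' = S ∖ (ℓ₁ ∪ ℓ₂)`.  Then `N₁ ∈ ℓ₂`,
`N₂ ∈ ℓ₁`, the tangents to `S` through the points of `S'` all pass through `ℓ₁ ∩ ℓ₂`, and
one of the following holds:
(1) `S` is the symmetric difference of `ℓ₁` and `ℓ₂` with one further point removed from
    both lines;
(2) `S` is projectively equivalent to the Blokhuis semioval;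
(3) for each `R ∈ S'` there are at least three lines through `R` meeting `S` in at least
    three points, and `q ≤ a + 1 + (a − 2)²(a − 3)²/6`. -/
theorem stmt_8 {F : Type*} [Field F] [Fintype F] (p h q : ℕ) (hp : p.Prime) (hq : q = p ^ h)
    (hcard : Fintype.card F = q)
    (a : ℕ) (ha : 2 < a)
    (S : Set (PGPoint F)) (hS : isSemioval S) (hsize : S.ncard = q - 1 + a)
    (ℓ₁ ℓ₂ : PGLine F) (hne : ℓ₁ ≠ ℓ₂) (h₁ : nsec S ℓ₁ = a) (h₂ : nsec S ℓ₂ = a)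
    (N₁ N₂ : PGPoint F)
    (hN₁ : ∀ P ∈ S, pgMem P ℓ₁ → ∀ t : PGLine F, pgMem P t → nsec S t = 1 → pgMem N₁ t)
    (hN₂ : ∀ P ∈ S, pgMem P ℓ₂ → ∀ t : PGLine F, pgMem P t → nsec S t = 1 → pgMem N₂ t)
    (S' : Set (PGPoint F)) (hS' : S' = S \ ({P | pgMem P ℓ₁} ∪ {P | pgMem P ℓ₂})) :
    pgMem N₁ ℓ₂ ∧ pgMem N₂ ℓ₁ ∧
    (∀ X : PGPoint F, pgMem X ℓ₁ → pgMem X ℓ₂ →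
      ∀ R ∈ S', ∀ t : PGLine F, pgMem R t → nsec S t = 1 → pgMem X t) ∧
    (isSymmDiffOfTwoLinesMinusTwoPoints S ℓ₁ ℓ₂ ∨
     projEquivalent (blokhuisSemioval F) S ∨
     ((∀ R ∈ S', 3 ≤ {L : PGLine F | pgMem R L ∧ 3 ≤ nsec S L}.ncard) ∧
       (q : ℚ) ≤ (a : ℚ) + 1 + ((a : ℚ) - 2) ^ 2 * ((a : ℚ) - 3) ^ 2 / 6)) := by
  subst hcard hS'
  obtain ⟨hN₁ℓ₂, hN₂ℓ₁, htan, hclass⟩ := stmt_8_general ha hS hsize hne h₁ h₂ hN₁ hN₂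
  exact ⟨hN₁ℓ₂, hN₂ℓ₁, fun X hX₁ hX₂ R hR => htan X hX₁ hX₂ R hR.1 (hR.2 ∘ .inl) (hR.2 ∘ .inr),
    hclass.imp_right .inl⟩
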